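/- arXiv:1608.07141 — 10 statements merged into one kernel-verified Lean document; each statement's English description precedes it below -/
import Mathlib

section
/- Let q ≥ 1 and δ = q² + q + 1. For 1 ≤ i ≤ q let P_i ∈ GL_{q+1}(ℤ/δℤ) be the permutation matrix interchanging coordinates i and i+1, and for 1 ≤ i ≤ q+1 let M_i ∈ GL_{q+1}(ℤ/δℤ) be the matrix obtained from the identity matrix by replacing its i-th row with the row all of whose entries are −1. Then the subgroup of GL_{q+1}(ℤ/δℤ) generated by P_1, …, P_q and M_1, …, M_{q+1} is isomorphic to the symmetric group S_{q+2} on q+2 letters. -/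
/-- The permutation matrix `P_i` interchanging coordinates `i` and `i+1`. -/
def swapMatrix (q δ : ℕ) (i : Fin q) : Matrix (Fin (q + 1)) (Fin (q + 1)) (ZMod δ) :=
  (Equiv.swap i.castSucc i.succ).permMatrix (ZMod δ)

/-- The matrix `M_i` obtained from the identity matrix by replacing its `i`-th row with the
row all of whose entries are `−1`. -/
def negRowMatrix (q δ : ℕ) (i : Fin (q + 1)) : Matrix (Fin (q + 1)) (Fin (q + 1)) (ZMod δ) :=
  Matrix.of fun a b => if a = i then -1 else if a = b then 1 else 0

namespace SwapNeg

/-- Rows: the standard basis vectors, followed by the all `-1` row. -/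
def W (q δ : ℕ) (k : Fin (q + 2)) (b : Fin (q + 1)) : ZMod δ :=
  if k = Fin.last (q + 1) then -1 else if k = b.castSucc then 1 else 0

lemma W_castSucc (q δ : ℕ) (a b : Fin (q + 1)) :
    W q δ a.castSucc b = if a = b then 1 else 0 := by
  simp [W, Fin.castSucc_ne_last]

lemma W_last (q δ : ℕ) (b : Fin (q + 1)) : W q δ (Fin.last _) b = -1 := by
  simp [W]

lemma W_sum (q δ : ℕ) (b : Fin (q + 1)) : ∑ k, W q δ k b = 0 := by
  rw [Fin.sum_univ_castSucc]
  simp [W_castSucc, W_last]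

/-- The matrix of a permutation. -/
def R (q δ : ℕ) (σ : Equiv.Perm (Fin (q + 2))) :
    Matrix (Fin (q + 1)) (Fin (q + 1)) (ZMod δ) :=
  Matrix.of fun a b => W q δ (σ a.castSucc) b

lemma W_mul_R (q δ : ℕ) (τ : Equiv.Perm (Fin (q + 2))) (k : Fin (q + 2)) (b : Fin (q + 1)) :
    ∑ j, W q δ k j * R q δ τ j b = W q δ (τ k) b := by
  induction k using Fin.lastCases with
  | last =>
    have h : ∑ k, W q δ (τ k) b = 0 := by
      rw [Equiv.sum_comp τ (fun k => W q δ k b)]; exact W_sum q δ b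
    rw [Fin.sum_univ_castSucc] at h
    simp only [W_last, R, Matrix.of_apply, neg_mul, one_mul, Finset.sum_neg_distrib]
    exact neg_eq_of_add_eq_zero_right h
  | cast a => simp [W_castSucc, R]

lemma R_mul (q δ : ℕ) (σ τ : Equiv.Perm (Fin (q + 2))) :
    R q δ σ * R q δ τ = R q δ (τ * σ) := by
  ext a b
  rw [Matrix.mul_apply]
  exact W_mul_R q δ τ (σ a.castSucc) b

lemma R_one (q δ : ℕ) : R q δ 1 = 1 := by
  ext a b
  simp [R, W_castSucc, Matrix.one_apply]

/-- The representation. -/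
def rho (q δ : ℕ) : Equiv.Perm (Fin (q + 2)) →* GL (Fin (q + 1)) (ZMod δ) :=
  MonoidHom.toHomUnits
    { toFun := fun σ => R q δ σ⁻¹
      map_one' := by rw [inv_one, R_one]
      map_mul' := fun σ τ => by rw [R_mul, mul_inv_rev] }

lemma rho_coe (q δ : ℕ) (σ : Equiv.Perm (Fin (q + 2))) :
    (rho q δ σ : Matrix (Fin (q + 1)) (Fin (q + 1)) (ZMod δ)) = R q δ σ⁻¹ := rfl

lemma R_swap (q δ : ℕ) (i : Fin q) :
    R q δ (Equiv.swap i.castSucc.castSucc i.succ.castSucc) = swapMatrix q δ i := by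
  ext a b
  have h : Equiv.swap i.castSucc.castSucc i.succ.castSucc a.castSucc
      = (Equiv.swap i.castSucc i.succ a).castSucc :=
    ((Fin.castSucc_injective _).map_swap _ _ _).symm
  simp only [R, swapMatrix, Matrix.of_apply, h, W_castSucc, Equiv.Perm.permMatrix,
    PEquiv.toMatrix_apply, Equiv.toPEquiv_apply, Option.mem_some_iff]

lemma R_negRow (q δ : ℕ) (i : Fin (q + 1)) :
    R q δ (Equiv.swap i.castSucc (Fin.last _)) = negRowMatrix q δ i := by
  ext a b
  simp only [R, negRowMatrix, Matrix.of_apply]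
  by_cases h : a = i
  · subst h; simp [W_last]
  · rw [Equiv.swap_apply_of_ne_of_ne (by simpa using h) (Fin.castSucc_ne_last a), W_castSucc,
      if_neg h]

lemma W_inj (q δ : ℕ) (hq : 1 ≤ q) (hδ : 2 < δ) : Function.Injective (W q δ) := by
  haveI : Fact (2 < δ) := ⟨hδ⟩
  haveI : Fact (1 < δ) := ⟨by omega⟩
  have key : ∀ a : Fin (q + 1), W q δ a.castSucc ≠ W q δ (Fin.last _) := fun a h => by
    have := congrFun h a
    rw [W_castSucc, W_last, if_pos rfl] at this
    exact ZMod.neg_one_ne_one this.symm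
  intro k l h
  induction k using Fin.lastCases with
  | last =>
    induction l using Fin.lastCases with
    | last => rfl
    | cast b => exact absurd h.symm (key b)
  | cast a =>
    induction l using Fin.lastCases with
    | last => exact absurd h (key a)
    | cast b =>
      have := congrFun h a
      rw [W_castSucc, W_castSucc, if_pos rfl] at this
      by_cases hb : b = a
      · rw [hb]
      · rw [if_neg hb] at this
        exact absurd this one_ne_zero

lemma rho_inj (q δ : ℕ) (hq : 1 ≤ q) (hδ : 2 < δ) : Function.Injective (rho q δ) := by
  rw [injective_iff_map_eq_one]
  intro σ h
  have h1 : R q δ σ⁻¹ = R q δ 1 := by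
    rw [← rho_coe, h, R_one]; rfl
  have h2 : ∀ a : Fin (q + 1), σ⁻¹ a.castSucc = a.castSucc := fun a =>
    W_inj q δ hq hδ (congrFun h1 a)
  rw [← inv_eq_one]
  ext1 k
  induction k using Fin.lastCases with
  | cast a => exact h2 a
  | last =>
    rcases Fin.eq_castSucc_or_eq_last (σ⁻¹ (Fin.last (q + 1))) with ⟨a, ha⟩ | ha
    · exact absurd (σ⁻¹.injective (ha.trans (h2 a).symm)).symm (Fin.castSucc_ne_last a)
    · exact ha

end SwapNeg

open SwapNeg in
/-- For `δ = q² + q + 1`, the subgroup of `GL_{q+1}(ℤ/δℤ)` generated by the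
matrices `P_1, …, P_q` and `M_1, …, M_{q+1}` is isomorphic to the symmetric group
`S_{q+2}`. -/
theorem subgroup_gen_by_swaps_negrows_iso_symm (q : ℕ) (hq : 1 ≤ q) :
    Nonempty
      ((Subgroup.closure
          {u : GL (Fin (q + 1)) (ZMod (q ^ 2 + q + 1)) |
            (∃ i : Fin q, (u : Matrix (Fin (q + 1)) (Fin (q + 1)) (ZMod (q ^ 2 + q + 1))) =
                swapMatrix q (q ^ 2 + q + 1) i) ∨
            ∃ i : Fin (q + 1),
              (u : Matrix (Fin (q + 1)) (Fin (q + 1)) (ZMod (q ^ 2 + q + 1))) =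
                negRowMatrix q (q ^ 2 + q + 1) i}) ≃*
        Equiv.Perm (Fin (q + 2))) := by
  have hδ : 2 < q ^ 2 + q + 1 := by nlinarith
  generalize q ^ 2 + q + 1 = δ at hδ ⊢
  have hinj := rho_inj q δ hq hδ
  refine ⟨((MulEquiv.subgroupCongr ?_).trans (MonoidHom.ofInjective hinj).symm)⟩
  apply le_antisymm
  · rw [Subgroup.closure_le]
    rintro u (⟨i, hi⟩ | ⟨i, hi⟩)
    · refine ⟨Equiv.swap i.castSucc.castSucc i.succ.castSucc, Units.ext ?_⟩
      rw [rho_coe, Equiv.swap_inv, R_swap, hi]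
    · refine ⟨Equiv.swap i.castSucc (Fin.last _), Units.ext ?_⟩
      rw [rho_coe, Equiv.swap_inv, R_negRow, hi]
  · rintro _ ⟨σ, rfl⟩
    have hσ : σ ∈ Submonoid.closure
        (Set.range fun i : Fin (q + 1) => Equiv.swap i.castSucc i.succ) := by
      rw [Equiv.Perm.mclosure_swap_castSucc_succ]; trivial
    induction hσ using Submonoid.closure_induction with
    | one => rw [map_one]; exact one_mem _
    | mul x y _ _ hx hy => rw [map_mul]; exact mul_mem hx hy
    | mem x hx =>
      obtain ⟨i, rfl⟩ := hx
      apply Subgroup.subset_closure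
      induction i using Fin.lastCases with
      | last =>
        right
        refine ⟨Fin.last _, ?_⟩
        rw [rho_coe, Equiv.swap_inv, Fin.succ_last, R_negRow]
      | cast j =>
        left
        refine ⟨j, ?_⟩
        rw [rho_coe, Equiv.swap_inv, ← Fin.castSucc_succ, R_swap]
end

section
/- Let D be a finite set with |D| = k ≥ 1. Let 𝒞 be the set of k×3 matrices with entries in D such that each of the three columns has pairwise distinct entries whose set equals D (equivalently, each column is a bijection from the k row indices to D). Let the symmetric group S_k act on 𝒞 by permuting rows and S₃ act by permuting columns. Then the number of orbits of the action of S_k × S₃ on 𝒞 equals (1/6)·((k!)² + 3·k! + 2·(τ_k + 1)), where τ_k denotes the number of elements of order exactly 3 in S_k. -/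
/-- The set `𝒞` of `k × 3` matrices with entries in `D` each of whose columns is a bijection
from the row indices to `D`. -/
def ColumnBijMatrices (D : Type*) (k : ℕ) : Type _ :=
  {M : Fin k → Fin 3 → D // ∀ j : Fin 3, Function.Bijective fun i => M i j}

/-- Two matrices in `𝒞` are related iff one is obtained from the other by permuting rows
(by some `σ ∈ S_k`) and columns (by some `τ ∈ S₃`); the equivalence classes of this relation
are exactly the orbits of the action of `S_k × S₃` on `𝒞`. -/
def matrixOrbitRel (D : Type*) (k : ℕ) (M N : ColumnBijMatrices D k) : Prop :=
  ∃ (σ : Equiv.Perm (Fin k)) (τ : Equiv.Perm (Fin 3)),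
    ∀ i j, N.1 i j = M.1 (σ i) (τ j)

namespace CCM

/-- The action of `P × S₃` on triples. -/
@[reducible] def act (P : Type*) [Group P] : MulAction (P × Equiv.Perm (Fin 3)) (Fin 3 → P) where
  smul g c := fun j => c (g.2⁻¹ j) * g.1⁻¹
  one_smul c := by
    funext j
    change c ((1 : Equiv.Perm (Fin 3))⁻¹ j) * (1 : P)⁻¹ = c j
    simp
  mul_smul g h c := by
    funext j
    change c ((g.2 * h.2)⁻¹ j) * (g.1 * h.1)⁻¹ = c (h.2⁻¹ (g.2⁻¹ j)) * h.1⁻¹ * g.1⁻¹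
    simp [mul_assoc]

/-- Pairs fixed by a column permutation. -/
abbrev Fx (P : Type*) [Group P] (t : Equiv.Perm (Fin 3)) : Type _ :=
  {x : P × (Fin 3 → P) // ∀ j, x.2 j = x.2 (t j) * x.1}

lemma card_one (P : Type*) [Group P] : Nat.card (Fx P 1) = Nat.card P ^ 3 := by
  have e : Fx P 1 ≃ (Fin 3 → P) :=
    { toFun := fun x => x.1.2
      invFun := fun c => ⟨(1, c), by simp⟩
      left_inv := by
        rintro ⟨⟨s, c⟩, h⟩
        have h1 : c 0 = c 0 * s := h 0
        have h2 : s = 1 := by simpa using h1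
        subst h2
        rfl
      right_inv := fun c => rfl }
  rw [Nat.card_congr e, Nat.card_fun, Nat.card_eq_fintype_card (α := Fin 3), Fintype.card_fin]

lemma card_swap (P : Type*) [Group P] (t : Equiv.Perm (Fin 3)) (a b d : Fin 3)
    (had : a ≠ d) (hd : t d = d) (ha : t a = b) (hb : t b = a)
    (hall : ∀ j, j = a ∨ j = b ∨ j = d) (hbd : b ≠ d) :
    Nat.card (Fx P t) = Nat.card P ^ 2 := by
  have e : Fx P t ≃ P × P :=
    { toFun := fun x => (x.1.2 a, x.1.2 d)
      invFun := fun c => ⟨(1, fun j => if j = d then c.2 else c.1), by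
        intro j
        rcases hall j with h | h | h <;> subst h <;> simp [*]⟩
      left_inv := by
        rintro ⟨⟨s, c⟩, h⟩
        have h1 := h d
        simp only [hd] at h1
        have h1 : s = 1 := by simpa using h1
        subst h1
        have h2 := h a
        simp only [ha, mul_one] at h2
        refine Subtype.ext (Prod.ext rfl ?_)
        funext j
        rcases hall j with h | h | h
        · subst h; simp [had]
        · subst h; simp [hbd, h2]
        · subst h; simp
      right_inv := fun c => by simp [had] }
  rw [Nat.card_congr e, Nat.card_prod, sq]

lemma card_rot (P : Type*) [Group P] (t : Equiv.Perm (Fin 3)) (a b d : Fin 3)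
    (hab : a ≠ b) (had : a ≠ d) (hbd : b ≠ d) (ha : t a = b) (hb : t b = d) (hd : t d = a)
    (hall : ∀ j, j = a ∨ j = b ∨ j = d) :
    Nat.card (Fx P t) = Nat.card {s : P // s ^ 3 = 1} * Nat.card P := by
  have key : ∀ (s : P) (c : Fin 3 → P), (∀ j, c j = c (t j) * s) →
      c d = c a * s ∧ c b = c a * s * s ∧ s ^ 3 = 1 := by
    intro s c h
    have h1 := h d
    have h2 := h b
    have h3 := h a
    rw [hd] at h1
    rw [hb, h1] at h2
    rw [ha, h2] at h3
    refine ⟨h1, h2, ?_⟩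
    have : c a * s ^ 3 = c a := by
      rw [pow_succ, sq, ← mul_assoc, ← mul_assoc]; exact h3.symm
    simpa using this
  have e : Fx P t ≃ {s : P // s ^ 3 = 1} × P :=
    { toFun := fun x => (⟨x.1.1, (key _ _ x.2).2.2⟩, x.1.2 a)
      invFun := fun y => ⟨(y.1.1, fun j => if j = a then y.2 else if j = d then y.2 * y.1.1
          else y.2 * y.1.1 * y.1.1), by
        have hs : y.2 * y.1.1 * y.1.1 * y.1.1 = y.2 := by
          have := y.1.2
          rw [pow_succ, sq] at this
          rw [mul_assoc, mul_assoc, ← mul_assoc y.1.1, this, mul_one]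
        intro j
        rcases hall j with h | h | h
        · subst h; simp [ha, hab.symm, hbd, hs]
        · subst h; simp [hb, hab.symm, hbd, had.symm]
        · subst h; simp [hd, had.symm]⟩
      left_inv := by
        rintro ⟨⟨s, c⟩, h⟩
        obtain ⟨h1, h2, h3⟩ := key s c h
        refine Subtype.ext (Prod.ext rfl ?_)
        funext j
        rcases hall j with h | h | h
        · subst h; simp
        · subst h; simp [hab.symm, hbd, h2]
        · subst h; simp [had.symm, h1]
      right_inv := fun y => by simp }
  rw [Nat.card_congr e, Nat.card_prod]

lemma sum_perm (f : Equiv.Perm (Fin 3) → ℕ) : ∑ t, f t =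
    f 1 + (f (Equiv.swap 0 1) + (f (Equiv.swap 0 2) + (f (Equiv.swap 1 2) +
      (f (finRotate 3) + f (finRotate 3)⁻¹)))) := by
  have : (Finset.univ : Finset (Equiv.Perm (Fin 3))) =
    {1, Equiv.swap 0 1, Equiv.swap 0 2, Equiv.swap 1 2, finRotate 3, (finRotate 3)⁻¹} := by
    decide
  rw [this]
  rw [Finset.sum_insert (by decide), Finset.sum_insert (by decide), Finset.sum_insert (by decide),
    Finset.sum_insert (by decide), Finset.sum_insert (by decide), Finset.sum_singleton]

lemma card_cube (P : Type*) [Group P] [Finite P] :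
    Nat.card {s : P // s ^ 3 = 1} = Nat.card {s : P // orderOf s = 3} + 1 := by
  classical
  have h : {s : P | s ^ 3 = 1} = insert 1 {s : P | orderOf s = 3} := by
    ext s
    have := Fact.mk Nat.prime_three
    simp only [Set.mem_setOf_eq, Set.mem_insert_iff, orderOf_eq_prime_iff]
    constructor
    · intro h
      by_cases h1 : s = 1 <;> simp [h, h1]
    · rintro (h | h)
      · simp [h]
      · exact h.1
  change Nat.card ({s : P | s ^ 3 = 1} : Set P) = Nat.card ({s : P | orderOf s = 3} : Set P) + 1
  rw [Nat.card_coe_set_eq, Nat.card_coe_set_eq, h, Set.ncard_insert_of_notMem (by simp)]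

lemma burnside (P : Type*) [Group P] [Finite P] :
    6 * Nat.card (Quotient (@MulAction.orbitRel _ (Fin 3 → P) _ (act P))) =
      Nat.card P ^ 2 + 3 * Nat.card P + 2 * (Nat.card {s : P // orderOf s = 3} + 1) := by
  classical
  letI := act P
  have := Fintype.ofFinite P
  have e := Nat.card_congr (MulAction.sigmaFixedByEquivOrbitsProdGroup
    (P × Equiv.Perm (Fin 3)) (Fin 3 → P))
  have e2 : (Σ g : P × Equiv.Perm (Fin 3), MulAction.fixedBy (Fin 3 → P) g) ≃
      Σ t : Equiv.Perm (Fin 3), Fx P t :=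
    { toFun := fun x => ⟨x.1.2, ⟨(x.1.1, x.2.1), by
        intro j
        have h : x.2.1 (x.1.2⁻¹ (x.1.2 j)) * x.1.1⁻¹ = x.2.1 (x.1.2 j) :=
          congrFun x.2.2 (x.1.2 j)
        change x.2.1 j = x.2.1 (x.1.2 j) * x.1.1
        rw [← h]; simp⟩⟩
      invFun := fun y => ⟨(y.2.1.1, y.1), ⟨y.2.1.2, by
        funext j
        change y.2.1.2 (y.1⁻¹ j) * y.2.1.1⁻¹ = y.2.1.2 j
        rw [y.2.2 (y.1⁻¹ j)]; simp⟩⟩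
      left_inv := fun x => rfl
      right_inv := fun x => rfl }
  rw [Nat.card_congr e2, Nat.card_sigma, sum_perm, card_one,
    card_swap P _ 0 1 2 (by decide) (by decide) (by decide) (by decide) (by decide) (by decide),
    card_swap P _ 0 2 1 (by decide) (by decide) (by decide) (by decide) (by decide) (by decide),
    card_swap P _ 1 2 0 (by decide) (by decide) (by decide) (by decide) (by decide) (by decide),
    card_rot P (finRotate 3) 0 1 2 (by decide) (by decide) (by decide) (by decide) (by decide)
      (by decide) (by decide),
    card_rot P (finRotate 3)⁻¹ 0 2 1 (by decide) (by decide) (by decide) (by decide) (by decide)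
      (by decide) (by decide), card_cube, Nat.card_prod, Nat.card_prod] at e
  have h6 : Nat.card (Equiv.Perm (Fin 3)) = 6 := by
    rw [Nat.card_eq_fintype_card, Fintype.card_perm]; rfl
  rw [h6] at e
  apply Nat.eq_of_mul_eq_mul_left (Nat.card_pos (α := P))
  change _ = Nat.card (Quotient (MulAction.orbitRel (P × Equiv.Perm (Fin 3)) (Fin 3 → P))) * _ at e
  linarith

end CCM

/-- For a finite set `D` with `|D| = k ≥ 1`, the number of orbits of the
action of `S_k × S₃` on `𝒞` (permuting rows and columns) equals
`(1/6)·((k!)² + 3·k! + 2·(τ_k + 1))`, where `τ_k` is the number of elements of order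
exactly `3` in `S_k`. -/
theorem count_column_matrices_orbits (k : ℕ) (hk : 1 ≤ k) (D : Type*) [Fintype D]
    (hD : Fintype.card D = k) :
    6 * Nat.card (Quot (matrixOrbitRel D k)) =
      (Nat.factorial k) ^ 2 + 3 * Nat.factorial k +
        2 * (Nat.card {σ : Equiv.Perm (Fin k) // orderOf σ = 3} + 1) := by
  classical
  have e : D ≃ Fin k := Fintype.equivFinOfCardEq hD
  let F : ColumnBijMatrices D k ≃ (Fin 3 → Equiv.Perm (Fin k)) :=
    { toFun := fun M j => (Equiv.ofBijective _ (M.2 j)).trans e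
      invFun := fun c => ⟨fun i j => e.symm (c j i), fun j => ((c j).trans e.symm).bijective⟩
      left_inv := fun M => by
        apply Subtype.ext
        funext i j
        simp
      right_inv := fun c => by
        funext j
        ext i
        simp }
  have hF : ∀ M i j, F M j i = e (M.1 i j) := fun M i j => rfl
  letI := CCM.act (Equiv.Perm (Fin k))
  have q : Quot (matrixOrbitRel D k) ≃
      Quotient (MulAction.orbitRel (Equiv.Perm (Fin k) × Equiv.Perm (Fin 3))
        (Fin 3 → Equiv.Perm (Fin k))) := by
    refine Quot.congr F ?_
    intro M N
    change _ ↔ MulAction.orbitRel _ _ (F M) (F N)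
    rw [Setoid.comm', MulAction.orbitRel_apply, MulAction.mem_orbit_iff]
    constructor
    · rintro ⟨s, t, h⟩
      refine ⟨(s⁻¹, t⁻¹), ?_⟩
      funext j
      change F M (t⁻¹⁻¹ j) * s⁻¹⁻¹ = F N j
      ext i
      rw [inv_inv, inv_inv, Equiv.Perm.mul_apply, hF, hF, h]
    · rintro ⟨⟨s, t⟩, h⟩
      refine ⟨s⁻¹, t⁻¹, fun i j => ?_⟩
      have h1 : F M (t⁻¹ j) * s⁻¹ = F N j := congrFun h j
      have h2 := congrArg (fun p : Equiv.Perm (Fin k) => p i) h1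
      simp only [Equiv.Perm.mul_apply, hF] at h2
      exact (e.injective h2).symm
  have hc : Nat.card (Equiv.Perm (Fin k)) = Nat.factorial k := by
    rw [Nat.card_eq_fintype_card, Fintype.card_perm, Fintype.card_fin]
  rw [Nat.card_congr q, ← hc]
  exact CCM.burnside _
end

section
/- Let q be a prime power, δ = q² + q + 1, E a based difference matrix, and Γ(E) the associated presented group. Let (e₀, e₁, e₂) and (f₀, f₁, f₂) be any two rows of E. Then in Γ(E) the relation (σ₁^{−e₁} σ₀ σ₁^{e₁})^{f₀ − e₀} · σ₁^{f₁ − e₁} · σ₂^{f₂ − e₂} = 1 holds (exponents taken via integer representatives modulo δ). In other words, the triple (σ₁^{−e₁} σ₀ σ₁^{e₁}, σ₁, σ₂) satisfies the product relations of the matrix obtained from E by subtracting the row (e₀, e₁, e₂) from every row. -/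
/-- A subset `D` of `ℤ/δℤ` is a difference set if every nonzero element `s` has exactly one
representation `s = d - d'` with `d, d' ∈ D`. -/
def IsDifferenceSet {δ : ℕ} (D : Finset (ZMod δ)) : Prop :=
  ∀ s : ZMod δ, s ≠ 0 → ∃! p : ZMod δ × ZMod δ, p.1 ∈ D ∧ p.2 ∈ D ∧ p.1 - p.2 = s

/-- A difference matrix is a `(q+1) × 3` matrix over `ℤ/δℤ` each of whose columns has pairwise
distinct entries forming a difference set. -/
def IsDifferenceMatrix (q δ : ℕ) (E : Fin (q + 1) → ZMod 3 → ZMod δ) : Prop :=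
  ∀ j : ZMod 3, (Function.Injective fun i => E i j) ∧
    IsDifferenceSet (Finset.image (fun i => E i j) Finset.univ)

/-- A difference matrix is based if some row is `(0,0,0)`. -/
def IsBasedMatrix (q δ : ℕ) (E : Fin (q + 1) → ZMod 3 → ZMod δ) : Prop :=
  ∃ i, ∀ j, E i j = 0

/-- The relators of the Singer cyclic lattice `Γ(E)`. -/
def singerRels (q δ : ℕ) (E : Fin (q + 1) → ZMod 3 → ZMod δ) : Set (FreeGroup (ZMod 3)) :=
  {r | (∃ j : ZMod 3, r = FreeGroup.of j ^ δ) ∨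
    ∃ i : Fin (q + 1), r =
      FreeGroup.of 0 ^ (E i 0).val * FreeGroup.of 1 ^ (E i 1).val *
        FreeGroup.of 2 ^ (E i 2).val}

/-- The Singer cyclic lattice associated to a based difference matrix `E`. -/
def SingerGroup (q δ : ℕ) (E : Fin (q + 1) → ZMod 3 → ZMod δ) : Type :=
  PresentedGroup (singerRels q δ E)

instance (q δ : ℕ) (E : Fin (q + 1) → ZMod 3 → ZMod δ) : Group (SingerGroup q δ E) :=
  inferInstanceAs (Group (PresentedGroup (singerRels q δ E)))

/-- The generator `σ_i` of `Γ(E)`. -/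
def σ (q δ : ℕ) (E : Fin (q + 1) → ZMod 3 → ZMod δ) (i : ZMod 3) : SingerGroup q δ E :=
  PresentedGroup.of i

theorem pow_sub_val_aux {G : Type*} [Group G] {n : ℕ} [NeZero n] (a : G) (ha : a ^ n = 1)
    (x y : ZMod n) : a ^ (x - y).val = a ^ x.val * (a ^ y.val)⁻¹ := by
  rw [eq_mul_inv_iff_mul_eq, ← pow_add]
  have h : x.val = ((x - y).val + y.val) % n := by
    rw [← ZMod.val_add, sub_add_cancel]
  rw [h, ← pow_mod_orderOf a ((x - y).val + y.val),
    ← pow_mod_orderOf a (((x - y).val + y.val) % n),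
    Nat.mod_mod_of_dvd _ (orderOf_dvd_of_pow_eq_one ha)]

theorem sigma_pow_aux (q δ : ℕ) (E : Fin (q + 1) → ZMod 3 → ZMod δ) (j : ZMod 3) :
    σ q δ E j ^ δ = 1 :=
  PresentedGroup.one_of_mem (rels := singerRels q δ E) (Or.inl ⟨j, rfl⟩)

theorem sigma_row_aux (q δ : ℕ) (E : Fin (q + 1) → ZMod 3 → ZMod δ) (i : Fin (q + 1)) :
    σ q δ E 0 ^ (E i 0).val * σ q δ E 1 ^ (E i 1).val * σ q δ E 2 ^ (E i 2).val = 1 :=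
  PresentedGroup.one_of_mem (rels := singerRels q δ E) (Or.inr ⟨i, rfl⟩)

theorem group_aux {G : Type*} [Group G] (a b c a' b' c' : G) (h : a * b * c = 1)
    (h' : a' * b' * c' = 1) :
    (b⁻¹ * (a⁻¹ * a') * b) * (b⁻¹ * b') * (c' * c⁻¹) = 1 := by
  have e : (b⁻¹ * (a⁻¹ * a') * b) * (b⁻¹ * b') * (c' * c⁻¹)
      = b⁻¹ * a⁻¹ * (a' * b' * c') * c⁻¹ := by group
  rw [e, h', eq_inv_of_mul_eq_one_right h]
  group

/-- For any two rows `(e₀,e₁,e₂)` and `(f₀,f₁,f₂)` of a based difference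
matrix `E`, the relation
`(σ₁^{−e₁} σ₀ σ₁^{e₁})^{f₀−e₀} · σ₁^{f₁−e₁} · σ₂^{f₂−e₂} = 1` holds in `Γ(E)`,
exponents taken via integer representatives modulo `δ = q² + q + 1`. -/
theorem singer_row_subtraction (q : ℕ) (hq : IsPrimePow q)
    (E : Fin (q + 1) → ZMod 3 → ZMod (q ^ 2 + q + 1))
    (hE : IsDifferenceMatrix q (q ^ 2 + q + 1) E)
    (hB : IsBasedMatrix q (q ^ 2 + q + 1) E)
    (i₁ i₂ : Fin (q + 1)) :
    ((σ q (q ^ 2 + q + 1) E 1 ^ (E i₁ 1).val)⁻¹ * σ q (q ^ 2 + q + 1) E 0 *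
          σ q (q ^ 2 + q + 1) E 1 ^ (E i₁ 1).val) ^ (E i₂ 0 - E i₁ 0).val *
        σ q (q ^ 2 + q + 1) E 1 ^ (E i₂ 1 - E i₁ 1).val *
        σ q (q ^ 2 + q + 1) E 2 ^ (E i₂ 2 - E i₁ 2).val = 1 := by
  have c : ∀ (j : ZMod 3) (x y : ZMod (q ^ 2 + q + 1)),
      σ q (q ^ 2 + q + 1) E j ^ (x - y).val
        = (σ q (q ^ 2 + q + 1) E j ^ y.val)⁻¹ * σ q (q ^ 2 + q + 1) E j ^ x.val := by
    intro j x y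
    rw [pow_sub_val_aux _ (sigma_pow_aux _ _ E j)]
    exact ((Commute.pow_pow_self _ _ _).inv_right).eq
  have hc : ∀ (g x : SingerGroup q (q ^ 2 + q + 1) E) (n : ℕ),
      (g⁻¹ * x * g) ^ n = g⁻¹ * x ^ n * g := by
    intro g x n
    simpa using conj_pow (a := g⁻¹) (b := x) (i := n)
  rw [hc, c 0, c 1, pow_sub_val_aux _ (sigma_pow_aux _ _ E 2)]
  exact group_aux _ _ _ _ _ _ (sigma_row_aux _ _ E i₁) (sigma_row_aux _ _ E i₂)
end

section
/- Let Γ be the group with presentation ⟨x, y, z ∣ x⁷ = y⁷ = z⁷ = 1, x y z³ = 1, x³ y³ z = 1⟩. Then there exists an automorphism φ of Γ satisfying φ(x) = x², φ(y) = y², φ(z) = y x, and φ has order exactly 3 in the automorphism group of Γ. -/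
/-- The relators of the Singer cyclic lattice `Γ_{2,2}`: with generators `x, y, z` (indexed by
`0, 1, 2 : Fin 3`), the relators are `x⁷`, `y⁷`, `z⁷`, `x y z³` and `x³ y³ z`. -/
def gamma22Rels : Set (FreeGroup (Fin 3)) :=
  {FreeGroup.of 0 ^ 7, FreeGroup.of 1 ^ 7, FreeGroup.of 2 ^ 7,
    FreeGroup.of 0 * FreeGroup.of 1 * FreeGroup.of 2 ^ 3,
    FreeGroup.of 0 ^ 3 * FreeGroup.of 1 ^ 3 * FreeGroup.of 2}

/-- The group `Γ_{2,2} = ⟨x, y, z ∣ x⁷ = y⁷ = z⁷ = 1, x y z³ = 1, x³ y³ z = 1⟩`. -/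
def Gamma22 : Type := PresentedGroup gamma22Rels

instance : Group Gamma22 := inferInstanceAs (Group (PresentedGroup gamma22Rels))

namespace G22

abbrev P := PresentedGroup gamma22Rels
abbrev x : P := PresentedGroup.of 0
abbrev y : P := PresentedGroup.of 1
abbrev z : P := PresentedGroup.of 2

lemma relOne {r : FreeGroup (Fin 3)} (h : r ∈ gamma22Rels) :
    PresentedGroup.mk gamma22Rels r = 1 := PresentedGroup.one_of_mem h

lemma hx : x ^ 7 = 1 := relOne (r := FreeGroup.of 0 ^ 7) (by simp [gamma22Rels])
lemma hy : y ^ 7 = 1 := relOne (r := FreeGroup.of 1 ^ 7) (by simp [gamma22Rels])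
lemma hz : z ^ 7 = 1 := relOne (r := FreeGroup.of 2 ^ 7) (by simp [gamma22Rels])
lemma h1 : x * y * z ^ 3 = 1 :=
  relOne (r := FreeGroup.of 0 * FreeGroup.of 1 * FreeGroup.of 2 ^ 3) (by simp [gamma22Rels])
lemma h2 : x ^ 3 * y ^ 3 * z = 1 :=
  relOne (r := FreeGroup.of 0 ^ 3 * FreeGroup.of 1 ^ 3 * FreeGroup.of 2) (by simp [gamma22Rels])

lemma hxy : x * y = z ^ 4 := by
  have h : z ^ 3 * z ^ 4 = 1 := by rw [← pow_add]; exact hz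
  exact (eq_inv_of_mul_eq_one_left h1).trans (eq_inv_of_mul_eq_one_right h).symm

lemma hzz : z = x * y * (x * y) := by
  rw [hxy, ← pow_add, show 4 + 4 = 7 + 1 from rfl, pow_add, hz]; simp

lemma hyx : y * x = x⁻¹ * z ^ 4 * x := by rw [← hxy]; group

lemma c1 : (x ^ 2) ^ 7 = 1 := by rw [← pow_mul, mul_comm, pow_mul, hx, one_pow]
lemma c2 : (y ^ 2) ^ 7 = 1 := by rw [← pow_mul, mul_comm, pow_mul, hy, one_pow]
lemma c3 : (y * x) ^ 7 = 1 := by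
  have h : y * x = x⁻¹ * z ^ 4 * x⁻¹⁻¹ := by rw [hyx, inv_inv]
  rw [h, conj_pow, ← pow_mul, mul_comm 4 7, pow_mul, hz]; simp
lemma c4 : x ^ 2 * y ^ 2 * (y * x) ^ 3 = 1 := by
  have h : x ^ 2 * y ^ 2 * (y * x) ^ 3 = x⁻¹ * (x ^ 3 * y ^ 3 * (x * y * (x * y))) * x := by
    simp only [pow_succ, pow_zero, one_mul]; group
  rw [h, ← hzz, h2]; simp
lemma c5 : (x ^ 2) ^ 3 * (y ^ 2) ^ 3 * (y * x) = 1 := by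
  have h : (x ^ 2) ^ 3 * (y ^ 2) ^ 3 * (y * x) = x ^ 6 * y ^ 7 * x := by
    simp only [pow_succ, pow_zero, one_mul, mul_assoc]
  rw [h, hy, mul_one, ← pow_succ, hx]

def f : P →* P := PresentedGroup.toGroup (f := ![x ^ 2, y ^ 2, y * x]) (by
  intro r hr
  simp only [gamma22Rels, Set.mem_insert_iff, Set.mem_singleton_iff] at hr
  rcases hr with rfl | rfl | rfl | rfl | rfl
  · simpa using c1
  · simpa using c2
  · simpa using c3
  · simpa using c4
  · simpa using c5)

lemma fx : f x = x ^ 2 := PresentedGroup.toGroup.of _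
lemma fy : f y = y ^ 2 := PresentedGroup.toGroup.of _
lemma fz : f z = y * x := PresentedGroup.toGroup.of _

lemma fffx : f (f (f x)) = x := by
  simp only [fx, map_pow, ← pow_mul]
  rw [show 2 * (2 * 2) = 7 + 1 from rfl, pow_succ, hx, one_mul]
lemma fffy : f (f (f y)) = y := by
  simp only [fy, map_pow, ← pow_mul]
  rw [show 2 * (2 * 2) = 7 + 1 from rfl, pow_succ, hy, one_mul]
lemma fffz : f (f (f z)) = z := by
  rw [hzz]
  simp only [map_mul, fffx, fffy]

lemma fff (a : P) : f (f (f a)) = a := by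
  have h : (f.comp (f.comp f)) = MonoidHom.id P := by
    apply PresentedGroup.ext
    intro i
    fin_cases i
    · exact fffx
    · exact fffy
    · exact fffz
  exact DFunLike.congr_fun h a

def g : P →* Multiplicative (ZMod 7) :=
  PresentedGroup.toGroup
    (f := ![Multiplicative.ofAdd 1, Multiplicative.ofAdd (-1), Multiplicative.ofAdd 0]) (by
  intro r hr
  simp only [gamma22Rels, Set.mem_insert_iff, Set.mem_singleton_iff] at hr
  rcases hr with rfl | rfl | rfl | rfl | rfl <;>
    simp only [map_mul, map_pow, FreeGroup.lift_apply_of] <;> decide)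

lemma gx : g x = Multiplicative.ofAdd 1 := PresentedGroup.toGroup.of _

lemma fx_ne : f x ≠ x := by
  intro h
  rw [fx] at h
  have := congrArg g h
  rw [map_pow, gx] at this
  revert this
  decide

def phi : MulAut P where
  toFun := f
  invFun a := f (f a)
  left_inv a := fff a
  right_inv a := fff a
  map_mul' := map_mul f

lemma phi_order : orderOf phi = 3 := by
  haveI : Fact (Nat.Prime 3) := ⟨by norm_num⟩
  apply orderOf_eq_prime
  · ext a
    exact fff a
  · intro h
    exact fx_ne (DFunLike.congr_fun h x)

end G22

/-- There is an automorphism `φ` of `Γ_{2,2}` with `φ(x) = x²`, `φ(y) = y²`,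
`φ(z) = y x`, and `φ` has order exactly `3` in `Aut(Γ_{2,2})`. -/
theorem gamma22_automorphism :
    ∃ φ : MulAut Gamma22,
      φ (PresentedGroup.of 0) = PresentedGroup.of 0 ^ 2 ∧
      φ (PresentedGroup.of 1) = PresentedGroup.of 1 ^ 2 ∧
      φ (PresentedGroup.of 2) = PresentedGroup.of 1 * PresentedGroup.of 0 ∧
      orderOf φ = 3 := by
  exact ⟨G22.phi, G22.fx, G22.fy, G22.fz, G22.phi_order⟩
end

section
/- The group with presentation ⟨x, y, z, a ∣ x⁷ = y⁷ = z⁷ = 1, x y z³ = 1, x³ y³ z = 1, a³ = 1, x a = a x², y a = a y², z a = a y x⟩ is isomorphic to the group with presentation ⟨a, b, c ∣ a³ = b³ = c³ = 1, (a b)² = b a, (a c)² = c a, c² b = (b c²)²⟩. -/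
/-- Relators of `Γ̂_{2,2}`: generators `x, y, z, a` (indexed by `0, 1, 2, 3 : Fin 4`) with
relators `x⁷`, `y⁷`, `z⁷`, `x y z³`, `x³ y³ z`, `a³`, `x a (a x²)⁻¹`, `y a (a y²)⁻¹`,
`z a (a y x)⁻¹`, encoding the relations `xa = ax²`, `ya = ay²`, `za = ayx`. -/
def gammaHatRels : Set (FreeGroup (Fin 4)) :=
  {FreeGroup.of 0 ^ 7, FreeGroup.of 1 ^ 7, FreeGroup.of 2 ^ 7,
    FreeGroup.of 0 * FreeGroup.of 1 * FreeGroup.of 2 ^ 3,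
    FreeGroup.of 0 ^ 3 * FreeGroup.of 1 ^ 3 * FreeGroup.of 2,
    FreeGroup.of 3 ^ 3,
    FreeGroup.of 0 * FreeGroup.of 3 * (FreeGroup.of 3 * FreeGroup.of 0 ^ 2)⁻¹,
    FreeGroup.of 1 * FreeGroup.of 3 * (FreeGroup.of 3 * FreeGroup.of 1 ^ 2)⁻¹,
    FreeGroup.of 2 * FreeGroup.of 3 * (FreeGroup.of 3 * FreeGroup.of 1 * FreeGroup.of 0)⁻¹}

/-- Relators of the Köhler–Meixner–Wester/Ronan lattice `Γ_{R4}`: generators `a, b, c`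
(indexed by `0, 1, 2 : Fin 3`) with relators `a³`, `b³`, `c³`, `(ab)²(ba)⁻¹`, `(ac)²(ca)⁻¹`
and `c²b ((bc²)²)⁻¹`. -/
def ronan4Rels : Set (FreeGroup (Fin 3)) :=
  {FreeGroup.of 0 ^ 3, FreeGroup.of 1 ^ 3, FreeGroup.of 2 ^ 3,
    (FreeGroup.of 0 * FreeGroup.of 1) ^ 2 * (FreeGroup.of 1 * FreeGroup.of 0)⁻¹,
    (FreeGroup.of 0 * FreeGroup.of 2) ^ 2 * (FreeGroup.of 2 * FreeGroup.of 0)⁻¹,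
    FreeGroup.of 2 ^ 2 * FreeGroup.of 1 * ((FreeGroup.of 1 * FreeGroup.of 2 ^ 2) ^ 2)⁻¹}

theorem aux_conj {G : Type*} [Group G] {a x : G} (h : x * a = a * x ^ 2) (n : ℕ) :
    x ^ n * a = a * x ^ (2 * n) := by
  have h1 : SemiconjBy a (x ^ 2) x := h.symm
  have h2 := h1.pow_right n
  rw [← pow_mul] at h2
  exact h2.symm

theorem aux_seven {G : Type*} [Group G] {a x : G} (ha : a ^ 3 = 1) (h : x * a = a * x ^ 2) :
    x ^ 7 = 1 := by
  have h1 := aux_conj h 1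
  have h2 := aux_conj h 2
  have h4 := aux_conj h 4
  norm_num at h1 h2 h4
  have : x * a ^ 3 = a ^ 3 * x ^ 8 := by
    calc x * a ^ 3 = x * a * a * a := by simp only [pow_succ, pow_zero, one_mul, mul_assoc]
      _ = a * (x ^ 2 * a) * a := by rw [h1]; group
      _ = a * a * (x ^ 4 * a) := by rw [h2]; group
      _ = a ^ 3 * x ^ 8 := by rw [h4]; simp only [pow_succ, pow_zero, one_mul, mul_assoc]
  rw [ha, mul_one, one_mul, pow_succ] at this
  exact (right_eq_mul.mp this)

theorem aux_cube {G : Type*} [Group G] {a x : G} (ha : a ^ 3 = 1) (h : x * a = a * x ^ 2) :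
    (a⁻¹ * x) ^ 3 = 1 := by
  have h7 := aux_seven ha h
  have e : a⁻¹ = a ^ 2 := by
    rw [inv_eq_iff_mul_eq_one, ← pow_succ']; exact ha
  have key : ∀ n : ℕ, x ^ n * a ^ 2 = a ^ 2 * x ^ (4 * n) := by
    intro n
    calc x ^ n * a ^ 2 = x ^ n * a * a := by rw [pow_two, mul_assoc]
      _ = a * (x ^ (2 * n) * a) := by rw [aux_conj h, mul_assoc]
      _ = a ^ 2 * x ^ (4 * n) := by
        rw [aux_conj h, ← mul_assoc, pow_two, ← mul_assoc 2 2 n]; norm_num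
  have k1 := key 1
  have k5 := key 5
  norm_num at k1 k5
  rw [e]
  calc (a ^ 2 * x) ^ 3 = a ^ 2 * (x * a ^ 2) * x * a ^ 2 * x := by simp only [pow_succ, pow_zero, one_mul, mul_assoc]
    _ = a ^ 2 * a ^ 2 * (x ^ 5 * a ^ 2) * x := by rw [k1]; group
    _ = (a ^ 3) ^ 2 * (x ^ 7) ^ 3 := by rw [k5]; group
    _ = 1 := by rw [ha, h7]; simp

theorem aux_inv {G : Type*} [Group G] {a y : G} (h : y * a = a * y ^ 2) :
    y⁻¹ * a = a * y⁻¹ ^ 2 := by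
  rw [inv_mul_eq_iff_eq_mul, ← mul_assoc, h]; group

theorem aux_fwd {G : Type*} [Group G] {x y z a : G} (h7 : z ^ 7 = 1)
    (h1 : x * y * z ^ 3 = 1) (hx : x * a = a * x ^ 2) (hy : y * a = a * y ^ 2)
    (hz : z * a = a * y * x) : y * x = (x ^ 2 * y ^ 2) ^ 2 := by
  have hz' : y * x = a⁻¹ * z * a := by rw [mul_assoc, hz]; group
  have hx' : x ^ 2 = a⁻¹ * x * a := by rw [mul_assoc, hx]; group
  have hy' : y ^ 2 = a⁻¹ * y * a := by rw [mul_assoc, hy]; group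
  have e : x * y = z⁻¹ ^ 3 := by
    rw [inv_pow]; exact eq_inv_of_mul_eq_one_left h1
  rw [hz', hx', hy']
  calc a⁻¹ * z * a = a⁻¹ * (z⁻¹ ^ 3 * z⁻¹ ^ 3 * z ^ 7) * a := by group
    _ = a⁻¹ * (x * y * (x * y)) * a := by rw [h7, ← e, mul_one]
    _ = _ := by rw [pow_two]; group

/-- Images of the hat generators. -/
def hatImg {G : Type*} [Group G] (a b c : G) : Fin 4 → G :=
  ![a * b, (a * c)⁻¹, ((a * b) ^ 3 * ((a * c)⁻¹) ^ 3)⁻¹, a]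

/-- Images of the Ronan generators. -/
def ronanImg {G : Type*} [Group G] (x y a : G) : Fin 3 → G :=
  ![a, a⁻¹ * x, a⁻¹ * y⁻¹]

theorem ronan_ok {G : Type*} [Group G] {x y z a : G} (h7 : z ^ 7 = 1)
    (h1 : x * y * z ^ 3 = 1) (ha : a ^ 3 = 1) (hx : x * a = a * x ^ 2) (hy : y * a = a * y ^ 2)
    (hz : z * a = a * y * x) : ∀ r ∈ ronan4Rels, FreeGroup.lift (ronanImg x y a) r = 1 := by
  have hy' := aux_inv hy
  have key := aux_fwd h7 h1 hx hy hz
  have hb := aux_cube ha hx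
  have hc := aux_cube ha hy'
  intro r hr
  simp only [ronan4Rels, Set.mem_insert_iff, Set.mem_singleton_iff] at hr
  rcases hr with rfl | rfl | rfl | rfl | rfl | rfl <;>
    simp only [map_mul, map_pow, map_inv, FreeGroup.lift_apply_of, ronanImg, Matrix.cons_val]
  · exact ha
  · exact hb
  · exact hc
  · rw [mul_inv_eq_one, mul_inv_cancel_left, mul_assoc, hx, inv_mul_cancel_left]
  · rw [mul_inv_eq_one, mul_inv_cancel_left, mul_assoc, hy', inv_mul_cancel_left]
  · have e : (a⁻¹ * y⁻¹) ^ 2 = y * a := by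
      rw [pow_succ] at hc
      rw [eq_inv_of_mul_eq_one_left hc]; group
    rw [e, mul_inv_eq_one]
    calc y * a * (a⁻¹ * x) = y * x := by group
      _ = (x ^ 2 * y ^ 2) ^ 2 := key
      _ = (a⁻¹ * x * (y * a)) ^ 2 := by
        congr 1
        rw [hy, ← mul_assoc, mul_assoc a⁻¹, hx]; group

theorem hat_ok {G : Type*} [Group G] {a b c : G} (ha : a ^ 3 = 1) (hb : b ^ 3 = 1)
    (hc : c ^ 3 = 1) (h1 : (a * b) ^ 2 = b * a) (h2 : (a * c) ^ 2 = c * a)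
    (h3 : c ^ 2 * b = (b * c ^ 2) ^ 2) :
    ∀ r ∈ gammaHatRels, FreeGroup.lift (hatImg a b c) r = 1 := by
  obtain ⟨x, hxd⟩ : ∃ x, x = a * b := ⟨_, rfl⟩
  obtain ⟨y, hyd⟩ : ∃ y, y = (a * c)⁻¹ := ⟨_, rfl⟩
  obtain ⟨w, hwd⟩ : ∃ w, w = b * c ^ 2 := ⟨_, rfl⟩
  have hx : x * a = a * x ^ 2 := by rw [hxd, h1, mul_assoc]
  have hy : y * a = a * y ^ 2 := by
    have : (a * c) * a = a * (a * c) ^ 2 := by rw [h2, mul_assoc]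
    rw [hyd]; exact aux_inv this
  have hx7 := aux_seven ha hx
  have hy7 := aux_seven ha hy
  have hw : w * b = b * w ^ 2 := by rw [hwd, ← h3, mul_assoc]
  have hw7 := aux_seven hb hw
  have hc2 : c ^ 2 = c⁻¹ := eq_inv_of_mul_eq_one_left (by rw [← pow_succ]; exact hc)
  have hb' : b = a⁻¹ * x := by rw [hxd]; group
  have hc' : c ^ 2 = y * a := by rw [hc2, hyd]; group
  have hw1 : w = x ^ 2 * y ^ 2 := by
    rw [hwd, hb', hc', hy, ← mul_assoc, mul_assoc a⁻¹, hx]; group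
  have hw2 : w ^ 2 = y * x := by
    rw [hwd, ← h3, hb', hc']; group
  have hx3 := aux_conj hx 3
  have hy3 := aux_conj hy 3
  norm_num at hx3 hy3
  have hx6 : x ^ 6 = x⁻¹ := eq_inv_of_mul_eq_one_left (by rw [← pow_succ]; exact hx7)
  have hy6 : y ^ 6 = y⁻¹ := eq_inv_of_mul_eq_one_left (by rw [← pow_succ]; exact hy7)
  have hz0 : x ^ 3 * y ^ 3 = a * (w ^ 2)⁻¹ * a⁻¹ := by
    rw [eq_mul_inv_iff_mul_eq, mul_assoc, hy3, ← mul_assoc, hx3, hx6, hy6, hw2]; group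
  obtain ⟨z, hzd⟩ : ∃ z, z = (x ^ 3 * y ^ 3)⁻¹ := ⟨_, rfl⟩
  have hz : z = a * w ^ 2 * a⁻¹ := by rw [hzd, hz0]; group
  have hxy : x * y = a * w * a⁻¹ := by
    rw [eq_mul_inv_iff_mul_eq, hw1, mul_assoc, hy, ← mul_assoc, hx]; group
  have himg : hatImg a b c = ![x, y, z, a] := by
    rw [hzd, hxd, hyd]; rfl
  rw [himg]
  intro r hr
  simp only [gammaHatRels, Set.mem_insert_iff, Set.mem_singleton_iff] at hr
  rcases hr with rfl | rfl | rfl | rfl | rfl | rfl | rfl | rfl | rfl <;>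
    simp only [map_mul, map_pow, map_inv, FreeGroup.lift_apply_of, Matrix.cons_val]
  · exact hx7
  · exact hy7
  · rw [hz, conj_pow, ← pow_mul, mul_comm 2 7, pow_mul, hw7]; group
  · rw [hz, conj_pow, hxy]
    calc _ = a * w ^ 7 * a⁻¹ := by group
      _ = 1 := by rw [hw7]; group
  · rw [hzd]; group
  · exact ha
  · rw [hx]; group
  · rw [hy]; group
  · rw [hz, hw2]; group

theorem rel_one {α : Type*} {rels : Set (FreeGroup α)} {r : FreeGroup α} (h : r ∈ rels) :
    FreeGroup.lift (PresentedGroup.of (rels := rels)) r = 1 := by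
  have : FreeGroup.lift (PresentedGroup.of (rels := rels)) = PresentedGroup.mk rels := by
    ext i; simp [PresentedGroup.of]
  rw [this]
  exact PresentedGroup.one_of_mem h

theorem ronan_split {G : Type*} [Group G] (f : Fin 3 → G)
    (R : ∀ r ∈ ronan4Rels, FreeGroup.lift f r = 1) :
    f 0 ^ 3 = 1 ∧ f 1 ^ 3 = 1 ∧ f 2 ^ 3 = 1 ∧ (f 0 * f 1) ^ 2 * (f 1 * f 0)⁻¹ = 1 ∧
    (f 0 * f 2) ^ 2 * (f 2 * f 0)⁻¹ = 1 ∧ f 2 ^ 2 * f 1 * ((f 1 * f 2 ^ 2) ^ 2)⁻¹ = 1 := by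
  simpa only [ronan4Rels, Set.mem_insert_iff, Set.mem_singleton_iff, forall_eq_or_imp, forall_eq,
    map_mul, map_pow, map_inv, FreeGroup.lift_apply_of] using R

theorem hat_split {G : Type*} [Group G] (f : Fin 4 → G)
    (H : ∀ r ∈ gammaHatRels, FreeGroup.lift f r = 1) :
    f 2 ^ 7 = 1 ∧ f 0 * f 1 * f 2 ^ 3 = 1 ∧ f 0 ^ 3 * f 1 ^ 3 * f 2 = 1 ∧ f 3 ^ 3 = 1 ∧
    f 0 * f 3 * (f 3 * f 0 ^ 2)⁻¹ = 1 ∧ f 1 * f 3 * (f 3 * f 1 ^ 2)⁻¹ = 1 ∧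
    f 2 * f 3 * (f 3 * f 1 * f 0)⁻¹ = 1 := by
  simp only [gammaHatRels, Set.mem_insert_iff, Set.mem_singleton_iff, forall_eq_or_imp, forall_eq,
    map_mul, map_pow, map_inv, FreeGroup.lift_apply_of] at H
  exact H.2.2

/-- The extension `Γ̂_{2,2}` of `Γ_{2,2}` is isomorphic to the chamber-regular
lattice `Γ_{R4}`. -/
theorem gammaHat_iso_ronan4 :
    Nonempty (PresentedGroup gammaHatRels ≃* PresentedGroup ronan4Rels) := by
  obtain ⟨ra, rb, rc, r1, r2, r3⟩ := ronan_split
    (PresentedGroup.of (rels := ronan4Rels)) (fun r h => rel_one h)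
  obtain ⟨hz7, h1, h2, ha, hx, hy, hz⟩ := hat_split
    (PresentedGroup.of (rels := gammaHatRels)) (fun r h => rel_one h)
  have F := hat_ok ra rb rc (mul_inv_eq_one.mp r1) (mul_inv_eq_one.mp r2) (mul_inv_eq_one.mp r3)
  have B := ronan_ok hz7 h1 ha (mul_inv_eq_one.mp hx) (mul_inv_eq_one.mp hy)
    (mul_inv_eq_one.mp hz)
  refine ⟨MonoidHom.toMulEquiv (PresentedGroup.toGroup F) (PresentedGroup.toGroup B) ?_ ?_⟩
  · ext i
    fin_cases i
    · simp [hatImg, ronanImg, PresentedGroup.toGroup.of]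
    · simp [hatImg, ronanImg, PresentedGroup.toGroup.of]
    · simp [hatImg, ronanImg, PresentedGroup.toGroup.of]
      have := eq_inv_of_mul_eq_one_right h2
      simpa using this.symm
    · simp [hatImg, ronanImg, PresentedGroup.toGroup.of]
  · ext i
    fin_cases i <;> simp [hatImg, ronanImg, PresentedGroup.toGroup.of]
end

section
/- Let A = {n ∈ ℕ : for every i ∈ ℕ, if 4 divides ⌊n/2^i⌋ then ⌊n/2^i⌋ = 0} (the natural numbers, including 0, whose binary expansion contains no two consecutive zeros), and let B = {n ∈ A : n is odd}. Then (1) B = {2i + 1 : i ∈ A}, and (2) A is the disjoint union of B, 2B = {2b : b ∈ B}, and {0}. -/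
theorem nodz_step (n : ℕ) : (∀ i : ℕ, 4 ∣ n / 2 ^ i → n / 2 ^ i = 0) ↔
    ((4 ∣ n → n = 0) ∧ ∀ i : ℕ, 4 ∣ (n / 2) / 2 ^ i → (n / 2) / 2 ^ i = 0) := by
  have e : ∀ i : ℕ, n / 2 ^ (i + 1) = (n / 2) / 2 ^ i := fun i => by
    rw [Nat.div_div_eq_div_mul, pow_succ']
  constructor
  · intro h
    refine ⟨by simpa using h 0, fun i => ?_⟩
    rw [← e]
    exact h (i + 1)
  · rintro ⟨h0, h⟩ i
    cases i with
    | zero => simpa using h0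
    | succ i => rw [e]; exact h i

/-- Let `A` be the set of natural numbers whose binary expansion contains no
two consecutive zeros (including `0`), and `B` the set of odd elements of `A`. Then
`B = {2i + 1 : i ∈ A}` and `A` is the disjoint union of `B`, `2B` and `{0}`. -/
theorem binary_no_double_zero_sets :
    let A : Set ℕ := {n | ∀ i : ℕ, 4 ∣ n / 2 ^ i → n / 2 ^ i = 0}
    let B : Set ℕ := {n ∈ A | Odd n}
    B = (fun i => 2 * i + 1) '' A ∧
    A = B ∪ (fun b => 2 * b) '' B ∪ {0} ∧
    Disjoint B ((fun b => 2 * b) '' B) ∧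
    Disjoint B ({0} : Set ℕ) ∧
    Disjoint ((fun b => 2 * b) '' B) ({0} : Set ℕ) := by
  intro A B
  have hA : ∀ n, n ∈ A ↔ ((4 ∣ n → n = 0) ∧ n / 2 ∈ A) := nodz_step
  have hB : ∀ n, n ∈ B ↔ (n ∈ A ∧ n % 2 = 1) := fun n => by
    rw [← Nat.odd_iff]; exact Iff.rfl
  have h0 : (0 : ℕ) ∈ A := fun i _ => by simp
  clear_value B A
  refine ⟨?_, ?_, ?_, ?_, ?_⟩
  · ext n
    rw [hB]
    constructor
    · rintro ⟨h, ho⟩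
      exact ⟨n / 2, ((hA n).1 h).2, by simp only; omega⟩
    · rintro ⟨i, hi, rfl⟩
      simp only
      refine ⟨(hA _).2 ⟨by omega, ?_⟩, by omega⟩
      rwa [show (2 * i + 1) / 2 = i by omega]
  · ext n
    constructor
    · intro h
      rcases Nat.eq_zero_or_pos n with hn | hn
      · exact Or.inr hn
      left
      rcases Nat.mod_two_eq_zero_or_one n with he | ho
      · right
        obtain ⟨h1, h2⟩ := (hA n).1 h
        exact ⟨n / 2, (hB _).2 ⟨h2, by omega⟩, by simp only; omega⟩
      · exact Or.inl ((hB n).2 ⟨h, ho⟩)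
    · rintro ((h | ⟨b, hb, rfl⟩) | h)
      · exact ((hB n).1 h).1
      · obtain ⟨h1, h2⟩ := (hB b).1 hb
        refine (hA _).2 ⟨by simp only; omega, ?_⟩
        simp only
        rwa [show 2 * b / 2 = b by omega]
      · rw [Set.mem_singleton_iff.1 h]; exact h0
  · rw [Set.disjoint_left]
    rintro n h ⟨b, hb, rfl⟩
    have := ((hB _).1 h).2
    simp only at this
    omega
  · rw [Set.disjoint_left]
    rintro n h hn
    have := ((hB _).1 h).2
    rw [Set.mem_singleton_iff] at hn
    omega
  · rw [Set.disjoint_left]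
    rintro n ⟨b, hb, rfl⟩ hn
    have := ((hB _).1 hb).2
    rw [Set.mem_singleton_iff] at hn
    simp only at hn
    omega
end

section
/- Let A = {n ∈ ℕ : for every i ∈ ℕ, if 4 divides ⌊n/2^i⌋ then ⌊n/2^i⌋ = 0} (the natural numbers, including 0, whose binary expansion contains no two consecutive zeros), and let B = {n ∈ A : n is odd}. Let α, β ∈ 𝔽₂⟦t⟧ be the formal power series over the field with two elements whose n-th coefficient equals 1 exactly when n ∈ A, respectively n ∈ B, and 0 otherwise. Then t·α² = β and α + β + β² = 1 in 𝔽₂⟦t⟧. -/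
open scoped Classical

/-- The power series `α ∈ 𝔽₂⟦t⟧` whose `n`-th coefficient is `1` exactly when the binary
expansion of `n` contains no two consecutive zeros. -/
noncomputable def alphaSeries : PowerSeries (ZMod 2) :=
  PowerSeries.mk fun n => if ∀ i : ℕ, 4 ∣ n / 2 ^ i → n / 2 ^ i = 0 then 1 else 0

/-- The power series `β ∈ 𝔽₂⟦t⟧` whose `n`-th coefficient is `1` exactly when `n` is odd and
the binary expansion of `n` contains no two consecutive zeros. -/
noncomputable def betaSeries : PowerSeries (ZMod 2) :=
  PowerSeries.mk fun n =>
    if (∀ i : ℕ, 4 ∣ n / 2 ^ i → n / 2 ^ i = 0) ∧ Odd n then 1 else 0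

def noZZ (n : ℕ) : Prop := ∀ i : ℕ, 4 ∣ n / 2 ^ i → n / 2 ^ i = 0

lemma noZZ_rec (n : ℕ) : noZZ n ↔ (4 ∣ n → n = 0) ∧ noZZ (n / 2) := by
  constructor
  · intro h
    refine ⟨by simpa using h 0, fun i => ?_⟩
    have := h (i + 1)
    rwa [pow_succ', ← Nat.div_div_eq_div_mul] at this
  · rintro ⟨h0, h⟩ i
    cases i with
    | zero => simpa using h0
    | succ i =>
      have := h i
      rwa [pow_succ', ← Nat.div_div_eq_div_mul]

lemma noZZ_odd (k : ℕ) : noZZ (2 * k + 1) ↔ noZZ k := by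
  rw [noZZ_rec, show (2 * k + 1) / 2 = k by omega]
  exact ⟨fun h => h.2, fun h => ⟨by omega, h⟩⟩

lemma noZZ_zero : noZZ 0 := fun i _ => by simp

lemma noZZ_even (k : ℕ) (hk : k ≠ 0) : noZZ (2 * k) ↔ noZZ k ∧ Odd k := by
  rw [noZZ_rec, show (2 * k) / 2 = k by omega, Nat.odd_iff]
  exact ⟨fun h => ⟨h.2, by have := h.1; omega⟩, fun h => ⟨by have := h.2; omega, h.1⟩⟩

lemma sq_eq_expand (f : PowerSeries (ZMod 2)) :
    f ^ 2 = PowerSeries.expand 2 two_ne_zero f := by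
  have h := MvPowerSeries.map_frobenius_expand (R := ZMod 2) (σ := Unit) 2 two_ne_zero (f := f)
  rw [ZMod.frobenius_zmod, MvPowerSeries.map_id] at h
  exact h.symm

lemma coeff_sq_even (f : PowerSeries (ZMod 2)) (k : ℕ) :
    PowerSeries.coeff (2 * k) (f ^ 2) = PowerSeries.coeff k f := by
  rw [sq_eq_expand, PowerSeries.coeff_expand_mul]

lemma coeff_sq_odd (f : PowerSeries (ZMod 2)) (k : ℕ) :
    PowerSeries.coeff (2 * k + 1) (f ^ 2) = 0 := by
  rw [sq_eq_expand, PowerSeries.coeff_expand_of_not_dvd]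
  omega

lemma coeff_alpha (n : ℕ) :
    PowerSeries.coeff n alphaSeries = if noZZ n then 1 else 0 := by
  rw [alphaSeries, PowerSeries.coeff_mk]; rfl

lemma coeff_beta (n : ℕ) :
    PowerSeries.coeff n betaSeries = if noZZ n ∧ Odd n then 1 else 0 := by
  rw [betaSeries, PowerSeries.coeff_mk]; rfl

/-- The series `α` and `β` satisfy `t·α² = β` and `α + β + β² = 1`
in `𝔽₂⟦t⟧`. -/
theorem alpha_beta_relations :
    PowerSeries.X * alphaSeries ^ 2 = betaSeries ∧
    alphaSeries + betaSeries + betaSeries ^ 2 = 1 := by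
  constructor
  · ext n
    obtain ⟨k, rfl | rfl⟩ := Nat.even_or_odd' n
    · have hb : ¬ Odd (2 * k) := by simp
      rw [coeff_beta, if_neg (fun h => hb h.2)]
      cases k with
      | zero => simp
      | succ k =>
        rw [show 2 * (k + 1) = (2 * k + 1) + 1 by ring, PowerSeries.coeff_succ_X_mul,
          coeff_sq_odd]
    · rw [PowerSeries.coeff_succ_X_mul, coeff_sq_even, coeff_alpha, coeff_beta, noZZ_odd]
      simp
  · ext n
    rw [map_add, map_add, PowerSeries.coeff_one]
    obtain ⟨k, rfl | rfl⟩ := Nat.even_or_odd' n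
    · have hb : ¬ Odd (2 * k) := by simp
      rw [coeff_sq_even, coeff_alpha, coeff_beta, coeff_beta,
        if_neg (show ¬ (noZZ (2 * k) ∧ Odd (2 * k)) from fun h => hb h.2)]
      by_cases hk : k = 0
      · subst hk
        simp [noZZ_zero]
      · rw [noZZ_even k hk, if_neg (show ¬ 2 * k = 0 by omega), add_zero]
        split_ifs <;> rfl
    · rw [coeff_sq_odd, coeff_alpha, coeff_beta, if_neg (show ¬ 2 * k + 1 = 0 by omega)]
      have : Odd (2 * k + 1) := ⟨k, rfl⟩
      simp only [this, and_true, add_zero]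
      exact CharTwo.add_self_eq_zero _
end

section
/- Let A = {n ∈ ℕ : for every i ∈ ℕ, if 4 divides ⌊n/2^i⌋ then ⌊n/2^i⌋ = 0}, B = {n ∈ A : n is odd}, and let α, β ∈ 𝔽₂⟦t⟧ be the power series whose n-th coefficient is 1 exactly when n ∈ A, respectively n ∈ B. Regard α and β as elements of the Laurent series field 𝔽₂((t)) and consider the 3×3 matrices over 𝔽₂((t)): s = [[0, 0, α], [1 + tα, β, α], [tα, 1, β]] and ρ = [[0, 0, t⁻¹], [1, 0, 0], [0, 1, 0]]. Then t·(sρ)³ = 1, t·(s³ρ)³ = 1, and s⁷ = 1, where 1 denotes the 3×3 identity matrix and t·M denotes scalar multiplication of a matrix M by t. -/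
open scoped Classical

/-- `α` regarded as a Laurent series. -/
noncomputable def αL : LaurentSeries (ZMod 2) :=
  HahnSeries.ofPowerSeries ℤ (ZMod 2) alphaSeries

/-- `β` regarded as a Laurent series. -/
noncomputable def βL : LaurentSeries (ZMod 2) :=
  HahnSeries.ofPowerSeries ℤ (ZMod 2) betaSeries

/-- `t` regarded as a Laurent series. -/
noncomputable def tL : LaurentSeries (ZMod 2) :=
  HahnSeries.ofPowerSeries ℤ (ZMod 2) PowerSeries.X

theorem mat_aux {K : Type*} [CommRing K] (a b t u : K) (h2 : (2 : K) = 0) (htu : t * u = 1)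
    (hb : b = t * a ^ 2) (ha : a = 1 + b + b ^ 2) :
    t • ((!![0, 0, a; 1 + t * a, b, a; t * a, 1, b] : Matrix (Fin 3) (Fin 3) K) *
      !![0, 0, u; 1, 0, 0; 0, 1, 0]) ^ 3 = 1 ∧
    t • ((!![0, 0, a; 1 + t * a, b, a; t * a, 1, b] : Matrix (Fin 3) (Fin 3) K) ^ 3 *
      !![0, 0, u; 1, 0, 0; 0, 1, 0]) ^ 3 = 1 ∧
    (!![0, 0, a; 1 + t * a, b, a; t * a, 1, b] : Matrix (Fin 3) (Fin 3) K) ^ 7 = 1 := by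
  have h3 : (!![0, 0, a; 1 + t * a, b, a; t * a, 1, b] : Matrix (Fin 3) (Fin 3) K) ^ 3
      = !![1, 0, a; 1 + t * a, b + 1, a; t * a, 1, b + 1] := by
    ext i j
    fin_cases i <;> fin_cases j <;>
      simp [pow_succ, Matrix.mul_apply, Fin.sum_univ_three] <;> grind
  refine ⟨?_, ?_, ?_⟩
  · ext i j
    fin_cases i <;> fin_cases j <;>
      simp [pow_succ, Matrix.mul_apply, Fin.sum_univ_three] <;> grind
  · rw [h3]
    ext i j
    fin_cases i <;> fin_cases j <;>
      simp [pow_succ, Matrix.mul_apply, Fin.sum_univ_three] <;> grind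
  · have e : (!![1, 0, a; 1 + t * a, b + 1, a; t * a, 1, b + 1] : Matrix (Fin 3) (Fin 3) K)
        = !![0, 0, a; 1 + t * a, b, a; t * a, 1, b] + 1 := by
      ext i j
      fin_cases i <;> fin_cases j <;> simp
    rw [e] at h3
    have h2' : (2 : Matrix (Fin 3) (Fin 3) K) = 0 := by
      rw [← map_ofNat (algebraMap K (Matrix (Fin 3) (Fin 3) K)) 2, h2, map_zero]
    generalize (!![0, 0, a; 1 + t * a, b, a; t * a, 1, b] : Matrix (Fin 3) (Fin 3) K) = s at h3
    have e2 : (s + 1) * (s + 1) = s ^ 2 + 1 := by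
      have : (s + 1) * (s + 1) = s ^ 2 + 1 + 2 * s := by noncomm_ring
      rw [this, h2', zero_mul, add_zero]
    have e3 : s + 1 + s = 1 := by
      have : s + 1 + s = 1 + 2 * s := by noncomm_ring
      rw [this, h2', zero_mul, add_zero]
    rw [show 7 = 3 + 3 + 1 from rfl, pow_add, pow_add, h3, e2, pow_one, add_mul, ← pow_succ, h3,
      one_mul, e3]

theorem condA_odd (m : ℕ) : (∀ i : ℕ, 4 ∣ (2 * m + 1) / 2 ^ i → (2 * m + 1) / 2 ^ i = 0) ↔
    ∀ i : ℕ, 4 ∣ m / 2 ^ i → m / 2 ^ i = 0 := by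
  have key : ∀ i, (2 * m + 1) / 2 ^ (i + 1) = m / 2 ^ i := fun i => by
    rw [pow_succ', ← Nat.div_div_eq_div_mul]; congr 1; omega
  constructor
  · intro h i; have := h (i + 1); rwa [key] at this
  · intro h i
    cases i with
    | zero => simp; omega
    | succ i => rw [key]; exact h i

theorem condA_even (m : ℕ) : (∀ i : ℕ, 4 ∣ (2 * m) / 2 ^ i → (2 * m) / 2 ^ i = 0) ↔
    m = 0 ∨ ((∀ i : ℕ, 4 ∣ m / 2 ^ i → m / 2 ^ i = 0) ∧ Odd m) := by
  have key : ∀ i, (2 * m) / 2 ^ (i + 1) = m / 2 ^ i := fun i => by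
    rw [pow_succ', ← Nat.div_div_eq_div_mul]; congr 1; omega
  constructor
  · intro h
    by_cases hm : m = 0
    · exact Or.inl hm
    · refine Or.inr ⟨fun i => ?_, ?_⟩
      · have := h (i + 1); rwa [key] at this
      · have := h 0
        simp only [pow_zero, Nat.div_one] at this
        rw [Nat.odd_iff]; omega
  · rintro (rfl | ⟨h, ho⟩) i
    · simp
    · cases i with
      | zero =>
        rw [Nat.odd_iff] at ho
        simp only [pow_zero, Nat.div_one]; omega
      | succ i => rw [key]; exact h i

theorem coeff_sq_aux (f : PowerSeries (ZMod 2)) (n : ℕ) :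
    PowerSeries.coeff n (f ^ 2) = if 2 ∣ n then PowerSeries.coeff (n / 2) f else 0 := by
  have h : (f.expand 2 two_ne_zero) = f ^ 2 := by
    have h1 : (f.expand 2 two_ne_zero).map (frobenius (ZMod 2) 2) = f ^ 2 :=
      MvPowerSeries.map_frobenius_expand 2 two_ne_zero
    rw [← h1, ZMod.frobenius_zmod, PowerSeries.map_id]; rfl
  rw [← h]
  split_ifs with hn
  · obtain ⟨m, rfl⟩ := hn
    rw [PowerSeries.coeff_expand_mul]; simp
  · exact PowerSeries.coeff_expand_of_not_dvd _ _ _ hn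

theorem beta_eq : betaSeries = (PowerSeries.X : PowerSeries (ZMod 2)) * alphaSeries ^ 2 := by
  refine PowerSeries.ext fun n => ?_
  cases n with
  | zero => simp [betaSeries]
  | succ n =>
    rw [PowerSeries.coeff_succ_X_mul, coeff_sq_aux]
    simp only [alphaSeries, betaSeries, PowerSeries.coeff_mk]
    rcases Nat.even_or_odd' n with ⟨m, rfl | rfl⟩
    · rw [condA_odd]; simp
    · rw [if_neg, if_neg]
      · omega
      · rw [Nat.odd_iff]; omega

theorem alpha_eq : alphaSeries = 1 + betaSeries + betaSeries ^ 2 := by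
  refine PowerSeries.ext fun n => ?_
  rw [map_add, map_add, coeff_sq_aux, PowerSeries.coeff_one]
  simp only [alphaSeries, betaSeries, PowerSeries.coeff_mk]
  rcases Nat.even_or_odd' n with ⟨m, rfl | rfl⟩
  · rw [condA_even]
    by_cases hm : m = 0
    · simp [hm]
    · simp [hm]
  · simp [Nat.odd_iff]

theorem gamma21_matrix_relations :
    let s : Matrix (Fin 3) (Fin 3) (LaurentSeries (ZMod 2)) :=
      !![0, 0, αL; 1 + tL * αL, βL, αL; tL * αL, 1, βL]
    let ρ : Matrix (Fin 3) (Fin 3) (LaurentSeries (ZMod 2)) :=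
      !![0, 0, tL⁻¹; 1, 0, 0; 0, 1, 0]
    tL • (s * ρ) ^ 3 = 1 ∧ tL • (s ^ 3 * ρ) ^ 3 = 1 ∧ s ^ 7 = 1 := by
  have h1 : (2 : LaurentSeries (ZMod 2)) = 0 := by
    have h : (2 : PowerSeries (ZMod 2)) = 0 := by
      have h : (2 : ZMod 2) = 0 := by decide
      rw [← map_ofNat (PowerSeries.C (R := ZMod 2)) 2, h, map_zero]
    rw [← map_ofNat (HahnSeries.ofPowerSeries ℤ (ZMod 2)) 2, h, map_zero]
  have h2 : tL ≠ 0 := by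
    unfold tL
    rw [Ne, map_eq_zero_iff _ HahnSeries.ofPowerSeries_injective]
    exact PowerSeries.X_ne_zero
  have h3 : βL = tL * αL ^ 2 := by
    unfold βL αL tL
    rw [← map_pow, ← map_mul, ← beta_eq]
  have h4 : αL = 1 + βL + βL ^ 2 := by
    unfold βL αL
    conv_lhs => rw [alpha_eq]
    simp only [map_add, map_pow, map_one]
  have h5 : tL * tL⁻¹ = 1 := mul_inv_cancel₀ h2
  generalize αL = a at *
  generalize βL = b at *
  generalize tL⁻¹ = u at *
  generalize tL = t at *
  have := mat_aux a b t u h1 h5 h3 h4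
  intro s ρ
  refine ⟨?_, ?_, ?_⟩
  · exact this.1
  · refine Eq.trans ?_ this.2.1
    congr 1
  · exact this.2.2
end

section
/- Let p be a prime, q = p^η a prime power with gcd(η, q² + q + 1) = 1 and q ≢ 1 (mod 3), and δ = q² + q + 1. Let F be a finite field with q elements and K = F((t)) the field of formal Laurent series over F. Then for every based difference matrix E with parameter q, every group homomorphism from Γ(E) to the group of ring automorphisms of K is trivial. -/
section Aux

open PowerSeries

theorem lemA (p η δ : ℕ) (hp : p.Prime) {F : Type*} [Field F] [Fintype F]
    (hF : Fintype.card F = p ^ η) (hg : Nat.gcd η δ = 1) (τ : F →+* F)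
    (hτ : ∀ a, τ^[δ] a = a) (a : F) : τ a = a := by
  haveI : Fact p.Prime := ⟨hp⟩
  have hη : η ≠ 0 := by
    rintro rfl
    have := Fintype.one_lt_card (α := F)
    simp at hF; omega
  haveI : CharP F p := by
    obtain ⟨r, hr⟩ := CharP.exists F
    haveI := hr
    obtain ⟨n, hpr, h⟩ := FiniteField.card F r
    rw [hF] at h
    have : p = r := by
      have h1 : p ∣ r ^ (n : ℕ) := h ▸ dvd_pow_self p hη
      exact (Nat.prime_dvd_prime_iff_eq hp hpr).1 (hp.dvd_of_dvd_pow h1)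
    rwa [this]
  letI : Algebra (ZMod p) F := ZMod.algebra F p
  have hcomm : ∀ r, τ (algebraMap (ZMod p) F r) = algebraMap (ZMod p) F r := fun r =>
    RingHom.congr_fun
      (Subsingleton.elim (τ.comp (algebraMap (ZMod p) F)) (algebraMap (ZMod p) F)) r
  let φ : F →ₐ[ZMod p] F := AlgHom.mk τ hcomm
  obtain ⟨k, hk⟩ := (FiniteField.bijective_frobeniusAlgHom_pow (ZMod p) F).2 φ
  have h1 : ∀ a, τ a = a ^ (p ^ (k : ℕ)) := by
    intro a
    have : φ a = a ^ (p ^ (k : ℕ)) := by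
      rw [← hk]
      simp only [AlgHom.coe_pow, FiniteField.coe_frobeniusAlgHom, pow_iterate, ZMod.card]
    exact this
  have h2 : ∀ n a, τ^[n] a = a ^ (p ^ ((k : ℕ) * n)) := by
    intro n
    induction n with
    | zero => simp
    | succ n ih => intro a; rw [Function.iterate_succ_apply', ih, h1, ← pow_mul, ← pow_add, Nat.mul_succ]
  have h3 : Function.IsPeriodicPt τ η a := by
    show τ^[η] a = a
    rw [h2, mul_comm, pow_mul, ← hF, FiniteField.pow_card_pow]
  have h4 := h3.gcd (hτ a : Function.IsPeriodicPt τ δ a)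
  rw [hg] at h4
  exact h4

theorem lemB (δ : ℕ) {F : Type*} [Field F] (hδ : (δ : F) = 1) (hδ0 : δ ≠ 0)
    (hroot : ∀ c : F, c ^ δ = 1 → c = 1)
    (τ : F⟦X⟧ →+* F⟦X⟧) (hC : ∀ a, τ (C a) = C a) (hτ : ∀ f, τ^[δ] f = f) (f : F⟦X⟧) :
    τ f = f := by
  have hX : constantCoeff (τ X) = 0 := by
    by_contra h
    have hu : IsUnit (τ X) := PowerSeries.isUnit_iff_constantCoeff.2 (isUnit_iff_ne_zero.2 h)
    have hu' : IsUnit (τ^[δ-1] (τ X)) := by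
      have : ∀ n, IsUnit (τ^[n] (τ X)) := by
        intro n
        induction n with
        | zero => exact hu
        | succ n ih => rw [Function.iterate_succ_apply']; exact ih.map τ
      exact this _
    rw [← Function.iterate_succ_apply, Nat.succ_eq_add_one, Nat.sub_add_cancel (by omega), hτ] at hu'
    exact PowerSeries.X_prime.not_isUnit hu'
  have hdec : ∀ g : F⟦X⟧, ∃ h, g = X * h + C (constantCoeff g) := fun g =>
    ⟨_, eq_X_mul_shift_add_const g⟩
  have hcc : ∀ g, constantCoeff (τ g) = constantCoeff g := by
    intro g
    obtain ⟨h, hh⟩ := hdec g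
    rw [hh]; simp [hC, hX]
  set c := coeff 1 (τ X) with hc
  have hc1 : ∀ g, constantCoeff g = 0 → coeff 1 (τ g) = c * coeff 1 g := by
    intro g hg
    obtain ⟨h, hh⟩ := hdec g
    rw [hg, map_zero, add_zero] at hh
    rw [hh, map_mul]
    obtain ⟨y, hy⟩ := X_dvd_iff.2 hX
    have e : c = constantCoeff y := by
      rw [hc, hy]; simpa using coeff_succ_X_mul 0 y
    have e1 : coeff 1 (X * h) = constantCoeff h := by simpa using coeff_succ_X_mul 0 h
    have e2 : coeff 1 (X * (y * τ h)) = constantCoeff (y * τ h) := by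
      simpa using coeff_succ_X_mul 0 (y * τ h)
    rw [hy, mul_assoc, e2, e1, e, map_mul, hcc]
  have hcit : ∀ n, constantCoeff (τ^[n] X) = (0:F) ∧ coeff 1 (τ^[n] X) = c ^ n := by
    intro n
    induction n with
    | zero => simp
    | succ n ih =>
      rw [Function.iterate_succ_apply']
      refine ⟨by rw [hcc, ih.1], ?_⟩
      rw [hc1 _ ih.1, ih.2, pow_succ']
  have hc1' : c = 1 := by
    apply hroot
    rw [← (hcit δ).2, hτ]; simp
  set N := ∑ k ∈ Finset.range δ, τ^[k] X with hN
  have hNτ : τ N = N := by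
    rw [hN, map_sum]
    simp only [← Function.iterate_succ_apply' τ]
    have h1 := Finset.sum_range_succ (fun k => τ^[k] X) δ
    have h2 := Finset.sum_range_succ' (fun k => τ^[k] X) δ
    rw [h1, hτ] at h2
    simpa using h2.symm
  have hN0 : constantCoeff N = 0 := by
    rw [hN, map_sum]; exact Finset.sum_eq_zero fun k _ => (hcit k).1
  have hN1 : coeff 1 N = 1 := by
    rw [hN, map_sum, Finset.sum_congr rfl fun k _ => (hcit k).2]; simp [hc1', hδ]
  obtain ⟨u, hu⟩ := X_dvd_iff.2 hN0
  have huu : IsUnit u := by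
    rw [PowerSeries.isUnit_iff_constantCoeff]
    have : coeff 1 (X * u) = constantCoeff u := by simpa using coeff_succ_X_mul 0 u
    rw [← this, ← hu, hN1]; exact isUnit_one
  obtain ⟨v, hv⟩ := huu.exists_right_inv
  have hXN : X = N * v := by rw [hu, mul_assoc, hv, mul_one]
  have hdiv : ∀ n g, X ^ n ∣ τ g - g := by
    intro n
    induction n with
    | zero => simp
    | succ n ih =>
      intro g
      obtain ⟨h, hh⟩ := hdec g
      rw [hXN, mul_assoc] at hh
      have : τ g - g = N * (τ (v * h) - v * h) := by
        rw [hh, map_add, hC, map_mul, hNτ]; ring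
      rw [this, pow_succ', ]
      exact mul_dvd_mul ⟨u, hu⟩ (ih _)
  rw [← sub_eq_zero]
  ext n
  exact X_pow_dvd_iff.1 (hdiv (n+1) f) n (by omega)

theorem root {F : Type*} [Field F] (n : ℕ) (hn : (n : F) = 1) (hn0 : n ≠ 0) (u : F⟦X⟧)
    (hu : constantCoeff u = 1) : ∃ y, y ^ n = u := by
  have := HenselianRing.is_henselian (I := Ideal.span {(X : F⟦X⟧)}) (Polynomial.X ^ n - Polynomial.C u)
    (Polynomial.monic_X_pow_sub_C u hn0) 1 (by
      rw [Ideal.mem_span_singleton, X_dvd_iff]; simp [hu]) (by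
      have : ((n : F⟦X⟧)) = 1 := by
        have := congrArg (C (R := F)) hn
        simpa using this
      simp [Polynomial.derivative_X_pow, this])
  obtain ⟨a, ha, -⟩ := this
  refine ⟨a, ?_⟩
  simpa [Polynomial.IsRoot, sub_eq_zero] using ha

theorem isPS {F : Type*} [Field F] (x : LaurentSeries F) (h : 0 ≤ x.order) :
    ∃ g : F⟦X⟧, HahnSeries.ofPowerSeries ℤ F g = x :=
  ⟨X ^ x.order.toNat * x.powerSeriesPart, LaurentSeries.X_order_mul_powerSeriesPart (by simpa using h)⟩

theorem lemC {F : Type*} [Field F] (p : ℕ) (hp : p.Prime) [CharP F p]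
    (σ : LaurentSeries F ≃+* LaurentSeries F)
    (hC : ∀ a : F, σ (HahnSeries.ofPowerSeries ℤ F (C a)) = HahnSeries.ofPowerSeries ℤ F (C a)) (f : F⟦X⟧) :
    ∃ g : F⟦X⟧, HahnSeries.ofPowerSeries ℤ F g = σ (HahnSeries.ofPowerSeries ℤ F f) := by
  have key : ∀ u : F⟦X⟧, constantCoeff u = 1 → 
      (σ (HahnSeries.ofPowerSeries ℤ F u)).order = 0 := by
    intro u hu
    set v := (σ (HahnSeries.ofPowerSeries ℤ F u)).order with hv
    obtain ⟨y, hy⟩ := root (p * v.natAbs + 1) (by simp) (by omega) u hu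
    rw [← hy, map_pow, map_pow, HahnSeries.order_pow] at hv
    generalize (σ (HahnSeries.ofPowerSeries ℤ F y)).order = w at hv
    by_contra h0
    have h1 : v.natAbs = (p * v.natAbs + 1) * w.natAbs := by
      conv_lhs => rw [hv]
      rw [nsmul_eq_mul, Int.natAbs_mul, Int.natAbs_natCast]
    have h2 : w.natAbs ≠ 0 := by intro h; rw [h] at h1; omega
    have h3 : 0 < v.natAbs := by omega
    have := hp.two_le
    nlinarith [Nat.pos_of_ne_zero h2, Nat.mul_le_mul_left (p * v.natAbs + 1) (Nat.pos_of_ne_zero h2)]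
  have e : f = (1 + (f - C (constantCoeff f))) + C (constantCoeff f - 1) := by
    simp; ring
  obtain ⟨g, hg⟩ := isPS _ (key (1 + (f - C (constantCoeff f))) (by simp)).ge
  refine ⟨g + C (constantCoeff f - 1), ?_⟩
  conv_rhs => rw [e]
  rw [map_add, map_add, map_add, hC, hg]

theorem lemF {F : Type*} [Field F] [Fintype F] 
    (σ : LaurentSeries F ≃+* LaurentSeries F) (a : F) : 
    ∃ b, HahnSeries.ofPowerSeries ℤ F (C b) = σ (HahnSeries.ofPowerSeries ℤ F (C a)) := by
  classical
  let ι : F →+* LaurentSeries F := (HahnSeries.ofPowerSeries ℤ F).comp C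
  have h1 : (Finset.univ.image ι) = (Polynomial.X ^ (Fintype.card F) - Polynomial.X : Polynomial (LaurentSeries F)).roots.toFinset := by
    apply Finset.eq_of_subset_of_card_le
    · intro x hx
      obtain ⟨b, -, rfl⟩ := Finset.mem_image.1 hx
      rw [Multiset.mem_toFinset, Polynomial.mem_roots (FiniteField.X_pow_card_sub_X_ne_zero _ Fintype.one_lt_card)]
      simp [Polynomial.IsRoot, ← map_pow, FiniteField.pow_card]
    · rw [Finset.card_image_of_injective _ ι.injective, Finset.card_univ]
      refine (Multiset.toFinset_card_le _).trans ((Polynomial.card_roots' _).trans ?_)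
      rw [FiniteField.X_pow_card_sub_X_natDegree_eq _ Fintype.one_lt_card]
  have h2 : σ (ι a) ∈ Finset.univ.image ι := by
    rw [h1, Multiset.mem_toFinset, Polynomial.mem_roots (FiniteField.X_pow_card_sub_X_ne_zero _ Fintype.one_lt_card)]
    simp [Polynomial.IsRoot, ← map_pow, FiniteField.pow_card]
  obtain ⟨b, -, hb⟩ := Finset.mem_image.1 h2
  exact ⟨b, hb⟩

/-- lift an endomorphism along an injective ring hom -/
theorem liftHom {R K : Type*} [CommRing R] [CommRing K] (ι : R →+* K) (hι : Function.Injective ι)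
    (σ : K ≃+* K) (h : ∀ a, ∃ b, ι b = σ (ι a)) (n : ℕ) (hn : σ ^ n = 1) :
    ∃ τ : R →+* R, (∀ a, ι (τ a) = σ (ι a)) ∧ ∀ a, τ^[n] a = a := by
  choose t ht using h
  let τ : R →+* R :=
    { toFun := t
      map_one' := hι (by simp [ht])
      map_zero' := hι (by simp [ht])
      map_mul' := fun a b => hι (by simp [ht])
      map_add' := fun a b => hι (by simp [ht]) }
  refine ⟨τ, ht, fun a => hι ?_⟩
  have : ∀ m, ι (τ^[m] a) = (σ ^ m) (ι a) := by
    intro m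
    induction m with
    | zero => simp
    | succ m ih => rw [Function.iterate_succ_apply', pow_succ', RingAut.mul_apply, ← ih]; exact ht _
  rw [this, hn]; rfl

theorem autTrivial (p η q : ℕ) (hp : p.Prime) (hq : q = p ^ η)
    (hgcd : Nat.gcd η (q ^ 2 + q + 1) = 1) (hmod : q % 3 ≠ 1)
    (F : Type*) [Field F] [Fintype F] (hF : Fintype.card F = q)
    (σ : RingAut (LaurentSeries F)) (hσ : σ ^ (q ^ 2 + q + 1) = 1) : σ = 1 := by
  have hinj : Function.Injective (HahnSeries.ofPowerSeries ℤ F) := HahnSeries.ofPowerSeries_injective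
  have hη : η ≠ 0 := by
    rintro rfl
    have := Fintype.one_lt_card (α := F)
    simp at hq; omega
  have hq0 : (q : F) = 0 := by rw [← hF]; exact FiniteField.cast_card_eq_zero F
  haveI : CharP F p := by
    haveI : Fact p.Prime := ⟨hp⟩
    rw [CharP.charP_iff_prime_eq_zero hp]
    rw [hq, Nat.cast_pow] at hq0
    exact eq_zero_of_pow_eq_zero hq0
  have hC : ∀ a : F, σ (HahnSeries.ofPowerSeries ℤ F (C a)) = HahnSeries.ofPowerSeries ℤ F (C a) := by
    obtain ⟨τ, h1, h2⟩ := liftHom ((HahnSeries.ofPowerSeries ℤ F).comp C) (RingHom.injective _) σ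
      (lemF σ) _ hσ
    intro a
    have := h1 a
    rw [lemA p η _ hp (hF.trans hq) hgcd τ h2 a] at this
    exact this.symm
  obtain ⟨τ, h1, h2⟩ := liftHom _ hinj σ (lemC p hp σ hC) _ hσ
  have hid : ∀ f, τ f = f := by
    refine lemB (q ^ 2 + q + 1) (by simp [hq0]) (by omega) ?_ τ (fun a => hinj ?_) h2
    · intro c hc
      have hc0 : c ≠ 0 := by rintro rfl; simp at hc
      have hc2 := FiniteField.pow_card_sub_one_eq_one c hc0
      rw [hF] at hc2
      have hq2 : 2 ≤ q := hF ▸ Fintype.one_lt_card (α := F)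
      have hc3 : c ^ 3 = 1 := by
        obtain ⟨m, rfl⟩ : ∃ m, q = m + 1 := ⟨q - 1, by omega⟩
        rw [Nat.add_sub_cancel] at hc2
        have : (m + 1) ^ 2 + (m + 1) + 1 = m * (m + 3) + 3 := by ring
        rw [this, pow_add, pow_mul, hc2, one_pow, one_mul] at hc
        exact hc
      have hcop : Nat.gcd 3 (q - 1) = 1 := by
        refine (Nat.Prime.coprime_iff_not_dvd Nat.prime_three).2 ?_
        omega
      have h := pow_gcd_eq_one.2 ⟨hc3, hc2⟩
      rwa [hcop, pow_one] at h
    · rw [h1, hC]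
  ext1 x
  obtain ⟨a, b, hb, rfl⟩ := IsFractionRing.div_surjective (A := F⟦X⟧) x
  have h3 : ∀ f : F⟦X⟧, σ (algebraMap _ (LaurentSeries F) f) = algebraMap _ _ f := by
    intro f
    have := h1 f
    rw [hid] at this
    exact this.symm
  rw [map_div₀, h3, h3]; rfl

end Aux

/-- Let `q = p^η` be a prime power with `gcd(η, q² + q + 1) = 1` and
`q ≢ 1 (mod 3)`, let `F` be a finite field with `q` elements and `K = F((t))` the field of
formal Laurent series over `F`. Then for every based difference matrix `E` with parameter `q`,
every group homomorphism from `Γ(E)` to the group of ring automorphisms of `K` is trivial. -/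
theorem singer_to_laurent_aut_trivial (p η q : ℕ) (hp : p.Prime) (hq : q = p ^ η)
    (hgcd : Nat.gcd η (q ^ 2 + q + 1) = 1) (hmod : q % 3 ≠ 1)
    (F : Type*) [Field F] [Fintype F] (hF : Fintype.card F = q)
    (E : Fin (q + 1) → ZMod 3 → ZMod (q ^ 2 + q + 1))
    (hE : IsDifferenceMatrix q (q ^ 2 + q + 1) E)
    (hB : IsBasedMatrix q (q ^ 2 + q + 1) E)
    (f : SingerGroup q (q ^ 2 + q + 1) E →* RingAut (LaurentSeries F)) :
    f = 1 := by
  refine MonoidHom.ext fun x => ?_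
  change f x = 1
  have hgen : ∀ j : ZMod 3, f (PresentedGroup.of (rels := singerRels q (q ^ 2 + q + 1) E) j : PresentedGroup (singerRels q (q ^ 2 + q + 1) E)) = 1 := by
    intro j
    apply autTrivial p η q hp hq hgcd hmod F hF
    have h : (PresentedGroup.of (rels := singerRels q (q ^ 2 + q + 1) E) j) ^ (q ^ 2 + q + 1) = 1 :=
      PresentedGroup.one_of_mem (Or.inl ⟨j, rfl⟩)
    exact ((map_pow f _ _).symm.trans (congrArg f h)).trans (map_one f)
  have h : (f : PresentedGroup (singerRels q (q ^ 2 + q + 1) E) →* RingAut (LaurentSeries F)) = 1 :=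
    PresentedGroup.ext hgen
  exact DFunLike.congr_fun h x
end

section
/- Let p be a prime and let K be a field that is a finite extension of the field ℚ_p of p-adic numbers (i.e., K is a ℚ_p-algebra of finite dimension as a ℚ_p-vector space, and a field). Then every ring automorphism of K fixes ℚ_p pointwise; in particular, every ring automorphism of ℚ_p is the identity. -/
open Polynomial in
theorem aux_root (p : ℕ) [Fact p.Prime] (y : ℤ_[p]) (hy : ‖y‖ < 1) (m : ℕ) :
    ∃ z : ℤ_[p], z ^ (p * m + 1) = 1 + y := by
  have hn : ‖((p * m + 1 : ℕ) : ℤ_[p])‖ = 1 := by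
    apply le_antisymm (PadicInt.norm_le_one _)
    by_contra h
    push Not at h
    have h2 := (PadicInt.norm_int_lt_one_iff_dvd (p := p) ((p * m + 1 : ℕ) : ℤ)).1 (by
      simpa using h)
    have h3 : p ∣ p * m + 1 := by exact_mod_cast h2
    have h4 : p ∣ 1 := (Nat.dvd_add_right (dvd_mul_right p m)).1 h3
    exact (Fact.out : p.Prime).one_lt.ne' (Nat.dvd_one.1 h4)
  have key := hensels_lemma (p := p) (R := ℤ_[p]) (F := X ^ (p * m + 1) - C (1 + y)) (a := 1) (by
    have e1 : aeval (1 : ℤ_[p]) (X ^ (p * m + 1) - C (1 + y) : ℤ_[p][X]) = -y := by simp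
    have e2 : aeval (1 : ℤ_[p]) (derivative (X ^ (p * m + 1) - C (1 + y) : ℤ_[p][X]))
        = ((p * m + 1 : ℕ) : ℤ_[p]) := by
      rw [derivative_sub, derivative_C, derivative_X_pow]
      simp
    rw [e1, e2, hn, norm_neg]
    simpa using hy)
  obtain ⟨z, hz, -⟩ := key
  refine ⟨z, ?_⟩
  simpa [sub_eq_zero] using hz

theorem aux_disc (p : ℕ) [Fact p.Prime] (K : Type*) [Field K]
    [Algebra ℚ_[p] K] [FiniteDimensional ℚ_[p] K] (b : K) (hb : 1 < spectralNorm ℚ_[p] K b) :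
    2 ≤ spectralNorm ℚ_[p] K b ^ Module.finrank ℚ_[p] K := by
  set d := (minpoly ℚ_[p] b).natDegree with hd
  have hint : IsIntegral ℚ_[p] b := Algebra.IsIntegral.isIntegral b
  have hd0 : 0 < d := minpoly.natDegree_pos hint
  have hdD : d ≤ Module.finrank ℚ_[p] K := minpoly.natDegree_le b
  have h1 : spectralNorm ℚ_[p] K b ^ d = ‖(minpoly ℚ_[p] b).coeff 0‖ := by
    rw [spectralNorm.spectralNorm_eq_norm_coeff_zero_rpow, one_div]
    exact Real.rpow_inv_natCast_pow (norm_nonneg _) hd0.ne'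
  have h2 : 1 < ‖(minpoly ℚ_[p] b).coeff 0‖ := by
    rw [← h1]; exact one_lt_pow₀ hb hd0.ne'
  have h3 : (2 : ℝ) ≤ ‖(minpoly ℚ_[p] b).coeff 0‖ := by
    have hp1 : (2 : ℝ) ≤ p := by exact_mod_cast (Fact.out : p.Prime).two_le
    have h0 : (minpoly ℚ_[p] b).coeff 0 ≠ 0 := by
      intro h; rw [h, norm_zero] at h2; linarith
    rw [Padic.norm_eq_zpow_neg_valuation h0] at h2 ⊢
    have hv := (one_lt_zpow_iff_right₀ (by linarith)).1 h2
    calc (2 : ℝ) ≤ (p : ℝ) ^ (1 : ℤ) := by simpa using hp1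
      _ ≤ _ := zpow_le_zpow_right₀ (by linarith) (by omega)
  calc (2 : ℝ) ≤ spectralNorm ℚ_[p] K b ^ d := by rw [h1]; exact h3
    _ ≤ _ := pow_le_pow_right₀ hb.le hdD

theorem aux_unit (p : ℕ) [Fact p.Prime] (K : Type*) [Field K]
    [Algebra ℚ_[p] K] [FiniteDimensional ℚ_[p] K] (f : ℚ_[p] →+* K) (y : ℚ_[p]) (hy : ‖y‖ < 1) :
    spectralNorm ℚ_[p] K (f y) ≤ 1 := by
  have hu : spectralNorm ℚ_[p] K (f (1 + y)) ≤ 1 := by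
    by_contra! h
    set c := spectralNorm ℚ_[p] K (f (1 + y)) with hc
    obtain ⟨m, hm⟩ := pow_unbounded_of_one_lt (c ^ Module.finrank ℚ_[p] K) (one_lt_two (α := ℝ))
    obtain ⟨w, hw⟩ : ∃ w : ℤ_[p], (w : ℚ_[p]) = y := ⟨⟨y, hy.le⟩, rfl⟩
    obtain ⟨z, hz⟩ := aux_root p w (by rw [PadicInt.norm_def, hw]; exact hy) m
    have hz' : (z : ℚ_[p]) ^ (p * m + 1) = 1 + y := by
      have := congrArg (fun t : ℤ_[p] => (t : ℚ_[p])) hz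
      simp only [PadicInt.coe_pow] at this
      rw [this, PadicInt.coe_add, PadicInt.coe_one, hw]
    have hcz : c = spectralNorm ℚ_[p] K (f z) ^ (p * m + 1) := by
      rw [hc, ← hz', map_pow]
      exact isPowMul_spectralNorm (K := ℚ_[p]) (L := K) _ (by omega)
    have hb : 1 < spectralNorm ℚ_[p] K (f z) := by
      by_contra! hle
      have := pow_le_one₀ (n := p * m + 1) (spectralNorm_nonneg _) hle
      linarith
    have h2 := aux_disc p K (f z) hb
    have h3 : (2 : ℝ) ^ (p * m + 1) ≤ c ^ Module.finrank ℚ_[p] K := by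
      rw [hcz, pow_right_comm]
      exact pow_le_pow_left₀ (by norm_num) h2 _
    have h4 : (2 : ℝ) ^ m ≤ 2 ^ (p * m + 1) := by
      apply pow_le_pow_right₀ (by norm_num)
      have := (Fact.out : p.Prime).pos
      nlinarith
    linarith
  have e : f y = f (1 + y) + (-1) := by simp
  rw [e]
  refine (isNonarchimedean_spectralNorm (K := ℚ_[p]) (L := K) _ _).trans (max_le hu ?_)
  rw [spectralNorm_neg (Algebra.IsAlgebraic.isAlgebraic _), spectralNorm_one]

theorem aux_main (p : ℕ) [Fact p.Prime] (K : Type*) [Field K]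
    [Algebra ℚ_[p] K] [FiniteDimensional ℚ_[p] K] (f : ℚ_[p] →+* K) (x : ℚ_[p]) :
    f x = algebraMap ℚ_[p] K x := by
  have hp1 : (1 : ℝ) < p := by exact_mod_cast (Fact.out : p.Prime).one_lt
  have hp0 : (p : ℚ_[p]) ≠ 0 := by exact_mod_cast (Fact.out : p.Prime).ne_zero
  have key : ∀ k : ℕ, spectralNorm ℚ_[p] K (f x - algebraMap ℚ_[p] K x) ≤ ((p : ℝ)⁻¹) ^ k := by
    intro k
    have hk : (0 : ℝ) < ((p : ℝ)⁻¹) ^ k := by positivity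
    obtain ⟨r, hr⟩ := Padic.rat_dense p x hk
    have hpk : ‖(p : ℚ_[p]) ^ k‖ = ((p : ℝ)⁻¹) ^ k := by rw [norm_pow, Padic.norm_p]
    obtain ⟨y, hy⟩ : ∃ y : ℚ_[p], x - r = (p : ℚ_[p]) ^ k * y :=
      ⟨(x - r) / (p : ℚ_[p]) ^ k, by field_simp⟩
    have hy1 : ‖y‖ < 1 := by
      rw [hy, norm_mul, hpk] at hr
      by_contra! h
      nlinarith
    have e : f x - algebraMap ℚ_[p] K x
        = (p : ℚ_[p]) ^ k • f y + algebraMap ℚ_[p] K (r - x) := by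
      have h1 : f x - r = (p : K) ^ k * f y := by
        have := congrArg f hy
        simpa using this
      rw [Algebra.smul_def, map_sub, map_pow, map_natCast, ← h1, map_ratCast]
      ring
    rw [e]
    refine (isNonarchimedean_spectralNorm (K := ℚ_[p]) (L := K) _ _).trans (max_le ?_ ?_)
    · rw [spectralNorm_smul _ (Algebra.IsAlgebraic.isAlgebraic _), coe_nnnorm, hpk]
      exact mul_le_of_le_one_right hk.le (aux_unit p K f y hy1)
    · rw [spectralNorm_extends, norm_sub_rev]
      exact hr.le
  have hlim := tendsto_pow_atTop_nhds_zero_of_lt_one (r := (p : ℝ)⁻¹) (by positivity)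
    (inv_lt_one_of_one_lt₀ hp1)
  have h0 := ge_of_tendsto' hlim key
  exact sub_eq_zero.1 (eq_zero_of_map_spectralNorm_eq_zero (K := ℚ_[p])
    (le_antisymm h0 (spectralNorm_nonneg _)) (Algebra.IsAlgebraic.isAlgebraic _))

/-- Let `K` be a finite field extension of `ℚ_p`. Then every ring
automorphism of `K` fixes `ℚ_p` pointwise; in particular every ring automorphism of
`ℚ_p` is the identity. -/
theorem padic_aut_fixes_Qp (p : ℕ) [Fact p.Prime] (K : Type*) [Field K]
    [Algebra ℚ_[p] K] [FiniteDimensional ℚ_[p] K] :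
    (∀ φ : K ≃+* K, ∀ x : ℚ_[p], φ (algebraMap ℚ_[p] K x) = algebraMap ℚ_[p] K x) ∧
    ∀ ψ : ℚ_[p] ≃+* ℚ_[p], ψ = RingEquiv.refl ℚ_[p] := by
  refine ⟨fun φ x => aux_main p K ((φ : K →+* K).comp (algebraMap ℚ_[p] K)) x, fun ψ => ?_⟩
  ext x
  exact aux_main p ℚ_[p] (ψ : ℚ_[p] →+* ℚ_[p]) x
end
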